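/- arXiv:1909.03667 — 2 statements merged into one kernel-verified Lean document; each statement's English description precedes it below -/
import Mathlib

section
/- For every α > 0 and M > 0, the optimal function in the generalized logarithmic Hardy–Littlewood–Sobolev inequality is unique: if f is admissible with ∫_{ℝ²} f dx = M and ∫_{ℝ²} f log(f/M) dx + α ∫_{ℝ²} V f dx + M(1−α)(1+log π) = (2/M)(α−1) ∬_{ℝ²×ℝ²} f(x) f(y) log|x−y| dx dy, then f = M μ almost everywhere. -/
open MeasureTheory Real Filter

noncomputable section

/-- The Euclidean plane ℝ². -/
abbrev E2 := EuclideanSpace ℝ (Fin 2)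

/-- The probability density μ(x) = 1/(π (1+|x|²)²) on ℝ². -/
def mu2 (x : E2) : ℝ := 1 / (π * (1 + ‖x‖ ^ 2) ^ 2)

/-- The external potential V(x) = −log μ(x) = 2 log(1+|x|²) + log π. -/
def Vpot (x : E2) : ℝ := 2 * Real.log (1 + ‖x‖ ^ 2) + Real.log π

/-- A function f on ℝ² is admissible if it is measurable, nonnegative a.e., integrable,
and ∫ f |log f|, ∫ V f and ∬ f(x) f(y) |log|x−y|| are all finite. -/
def Admissible (f : E2 → ℝ) : Prop :=
  Measurable f ∧ (∀ᵐ x : E2, 0 ≤ f x) ∧ Integrable f ∧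
  Integrable (fun x => f x * |Real.log (f x)|) ∧
  Integrable (fun x => Vpot x * f x) ∧
  Integrable (fun p : E2 × E2 => f p.1 * f p.2 * |Real.log ‖p.1 - p.2‖|)

/-- The repulsive free energy F⁺_β. -/
def Fplus (β : ℝ) (f : E2 → ℝ) : ℝ :=
  (∫ x, f x * Real.log (f x)) + β * (∫ x, Vpot x * f x)
    - (1 / (4 * π)) * ∫ p : E2 × E2, f p.1 * f p.2 * Real.log ‖p.1 - p.2‖

/-- The attractive free energy F⁻_β. -/
def Fminus (β : ℝ) (f : E2 → ℝ) : ℝ :=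
  (∫ x, f x * Real.log (f x)) + β * (∫ x, Vpot x * f x)
    + (1 / (4 * π)) * ∫ p : E2 × E2, f p.1 * f p.2 * Real.log ‖p.1 - p.2‖


/-- The normalized squared chordal distance between the stereographic preimages of `x` and `y`. -/
def chord (x y : E2) : ℝ := ‖x - y‖ ^ 2 / ((1 + ‖x‖ ^ 2) * (1 + ‖y‖ ^ 2))

/-- The inverse stereographic projection of `x` onto the unit sphere of `ℝ³`. -/
def stereo (x : E2) : Fin 3 → ℝ :=
  ![2 * x 0 / (1 + ‖x‖ ^ 2), 2 * x 1 / (1 + ‖x‖ ^ 2), (‖x‖ ^ 2 - 1) / (1 + ‖x‖ ^ 2)]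

lemma one_add_norm_sq_pos (x : E2) : 0 < 1 + ‖x‖ ^ 2 := by positivity

lemma norm_sq_eq_coords (x : E2) : ‖x‖ ^ 2 = x 0 ^ 2 + x 1 ^ 2 := by
  simp [EuclideanSpace.norm_sq_eq, Fin.sum_univ_two]

lemma sum_stereo_sq (x : E2) : ∑ i, stereo x i ^ 2 = 1 := by
  have h := one_add_norm_sq_pos x
  simp only [stereo, Fin.sum_univ_three, Matrix.cons_val]
  field_simp
  rw [norm_sq_eq_coords]
  ring

lemma sum_stereo_mul (x y : E2) : ∑ i, stereo x i * stereo y i = 1 - 2 * chord x y := by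
  have h := one_add_norm_sq_pos x
  have h' := one_add_norm_sq_pos y
  simp only [stereo, chord, Fin.sum_univ_three, Matrix.cons_val]
  field_simp
  simp only [norm_sq_eq_coords, PiLp.sub_apply]
  ring

lemma chord_nonneg (x y : E2) : 0 ≤ chord x y := by unfold chord; positivity

lemma chord_comm (x y : E2) : chord x y = chord y x := by
  rw [chord, chord, norm_sub_rev, mul_comm]

lemma chord_le_one (x y : E2) : chord x y ≤ 1 := by
  have h := sum_stereo_mul x y
  have h1 := sum_stereo_sq x
  have h2 := sum_stereo_sq y
  simp only [Fin.sum_univ_three] at *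
  nlinarith [sq_nonneg (stereo x 0 + stereo y 0), sq_nonneg (stereo x 1 + stereo y 1),
    sq_nonneg (stereo x 2 + stereo y 2)]

lemma chord_pos {x y : E2} (h : x ≠ y) : 0 < chord x y := by
  have : 0 < ‖x - y‖ := norm_pos_iff.mpr (sub_ne_zero.mpr h)
  unfold chord; positivity

lemma log_chord_nonpos (x y : E2) : log (chord x y) ≤ 0 :=
  log_nonpos (chord_nonneg x y) (chord_le_one x y)

lemma log_chord {x y : E2} (h : x ≠ y) :
    log (chord x y) = 2 * log ‖x - y‖ - log (1 + ‖x‖ ^ 2) - log (1 + ‖y‖ ^ 2) := by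
  have h0 : ‖x - y‖ ≠ 0 := norm_ne_zero_iff.mpr (sub_ne_zero.mpr h)
  have h1 := one_add_norm_sq_pos x
  have h2 := one_add_norm_sq_pos y
  rw [chord, log_div (by positivity) (by positivity), log_mul h1.ne' h2.ne', log_pow]
  push_cast; ring

@[fun_prop]
lemma continuous_stereo (i : Fin 3) : Continuous fun x => stereo x i := by
  have h (x : E2) : 1 + ‖x‖ ^ 2 ≠ 0 := (one_add_norm_sq_pos x).ne'
  fin_cases i <;> simp [stereo] <;> fun_prop (disch := exact h)

lemma abs_stereo_le_one (x : E2) (i : Fin 3) : |stereo x i| ≤ 1 := by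
  have h := Finset.single_le_sum (f := fun j => stereo x j ^ 2) (fun j _ => sq_nonneg _)
    (Finset.mem_univ i)
  rw [sum_stereo_sq] at h
  exact abs_le_one_iff_mul_self_le_one.mpr (by simpa [sq] using h)

@[fun_prop]
lemma continuous_chord : Continuous fun p : E2 × E2 => chord p.1 p.2 := by
  have h (x : E2) : 1 + ‖x‖ ^ 2 ≠ 0 := (one_add_norm_sq_pos x).ne'
  unfold chord
  fun_prop (disch := intro p; exact mul_ne_zero (h _) (h _))

@[fun_prop]
lemma continuous_mu2 : Continuous mu2 := by
  unfold mu2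
  fun_prop (disch := intro x; positivity)

lemma mu2_pos (x : E2) : 0 < mu2 x := by unfold mu2; positivity

lemma log_mu2 (x : E2) : log (mu2 x) = -(2 * log (1 + ‖x‖ ^ 2) + log π) := by
  have h := one_add_norm_sq_pos x
  rw [mu2, one_div, log_inv, log_mul pi_pos.ne' (by positivity), log_pow]
  push_cast; ring

/-- Off the diagonal of the product space, up to a null set. -/
lemma ae_fst_ne_snd : ∀ᵐ p : E2 × E2, p.1 ≠ p.2 := by
  have hm : MeasurableSet {p : E2 × E2 | p.1 ≠ p.2} :=
    (measurableSet_eq_fun measurable_fst measurable_snd).compl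
  refine (Measure.ae_prod_iff_ae_ae (μ := (volume : Measure E2)) hm).mpr (.of_forall fun x => ?_)
  filter_upwards [Measure.ae_ne volume x] with y hy
  exact hy.symm

open scoped ENNReal ComplexConjugate

lemma lintegral_radial_complex {G : ℝ → ℝ≥0∞} (hG : Measurable G) :
    ∫⁻ w : ℂ, ENNReal.ofReal (1 / (π * (1 + ‖w‖ ^ 2) ^ 2)) * G (‖w‖ ^ 2 / (1 + ‖w‖ ^ 2))
      = ∫⁻ r in Set.Ioo (0 : ℝ) 1, G r := by
  set φ : ℝ → ℝ := fun r => r ^ 2 / (1 + r ^ 2) with hφ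
  have himage : φ '' Set.Ioi 0 = Set.Ioo 0 1 := by
    ext s
    constructor
    · rintro ⟨r, hr, rfl⟩
      have hr : 0 < r := hr
      refine ⟨by simp only [hφ]; positivity, ?_⟩
      simp only [hφ]
      rw [div_lt_one (by positivity)]
      linarith
    · rintro ⟨h0, h1⟩
      have h1' : 0 < 1 - s := by linarith
      refine ⟨√(s / (1 - s)), Real.sqrt_pos.mpr (by positivity), ?_⟩
      simp only [hφ]
      rw [Real.sq_sqrt (by positivity)]
      field_simp
      ring
  have hderiv : ∀ r ∈ Set.Ioi (0 : ℝ),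
      HasDerivWithinAt φ (2 * r / (1 + r ^ 2) ^ 2) (Set.Ioi 0) r := by
    intro r _
    have h1 : 1 + r ^ 2 ≠ 0 := by positivity
    have h := (hasDerivAt_pow 2 r).div ((hasDerivAt_pow 2 r).const_add 1) h1
    refine HasDerivAt.hasDerivWithinAt (h.congr_deriv ?_)
    field_simp
    push_cast
    ring
  have hinj : Set.InjOn φ (Set.Ioi 0) := by
    intro a ha b hb hab
    have ha : 0 < a := ha
    have hb : 0 < b := hb
    simp only [hφ] at hab
    rw [div_eq_div_iff (by positivity) (by positivity)] at hab
    have : a ^ 2 = b ^ 2 := by linarith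
    exact (pow_left_inj₀ ha.le hb.le two_ne_zero).mp this
  rw [← Complex.lintegral_comp_polarCoord_symm, ← himage,
    lintegral_image_eq_lintegral_abs_deriv_mul measurableSet_Ioi hderiv hinj]
  have hnorm : ∀ p ∈ polarCoord.target, ‖Complex.polarCoord.symm p‖ = p.1 := by
    intro p hp
    rw [Complex.norm_polarCoord_symm, abs_of_pos hp.1]
  calc _ = ∫⁻ p in polarCoord.target,
        ENNReal.ofReal (p.1 / (π * (1 + p.1 ^ 2) ^ 2)) * G (φ p.1) := by
        refine setLIntegral_congr_fun polarCoord.open_target.measurableSet fun p hp => ?_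
        have h0 : 0 < p.1 := hp.1
        simp only [hnorm p hp, smul_eq_mul, hφ]
        rw [← mul_assoc, ← ENNReal.ofReal_mul h0.le]
        congr 2
        ring
    _ = ∫⁻ r in Set.Ioi (0 : ℝ), (ENNReal.ofReal (r / (π * (1 + r ^ 2) ^ 2)) * G (φ r)) *
          ENNReal.ofReal (2 * π) := by
        have hg : Measurable fun r => ENNReal.ofReal (r / (π * (1 + r ^ 2) ^ 2)) * G (φ r) := by
          fun_prop
        rw [polarCoord_target, Measure.volume_eq_prod, ← Measure.prod_restrict,
          lintegral_mul_const _ hg]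
        have h := lintegral_prod_mul (μ := volume.restrict (Set.Ioi (0 : ℝ)))
          (ν := volume.restrict (Set.Ioo (-π) π)) hg.aemeasurable
          (aemeasurable_const (b := (1 : ℝ≥0∞)))
        simp only [mul_one] at h
        rw [h, lintegral_one, Measure.restrict_apply_univ, Real.volume_Ioo]
        congr 2
        ring
    _ = _ := by
        refine setLIntegral_congr_fun measurableSet_Ioi fun r hr => ?_
        have hr : 0 < r := hr
        have hpi := pi_pos
        rw [mul_right_comm, ← ENNReal.ofReal_mul (by positivity), abs_of_pos (by positivity)]
        congr 2
        field_simp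

lemma lintegral_mobius_complex (x : ℂ) (G : ℝ → ℝ≥0∞) :
    ∫⁻ y : ℂ, ENNReal.ofReal (1 / (π * (1 + ‖y‖ ^ 2) ^ 2)) *
        G (‖x - y‖ ^ 2 / ((1 + ‖x‖ ^ 2) * (1 + ‖y‖ ^ 2)))
      = ∫⁻ w : ℂ, ENNReal.ofReal (1 / (π * (1 + ‖w‖ ^ 2) ^ 2)) *
          G (‖w‖ ^ 2 / (1 + ‖w‖ ^ 2)) := by
  set φ : ℂ → ℂ := fun y => (y - x) / (1 + conj x * y) with hφ
  set s : Set ℂ := {y | 1 + conj x * y ≠ 0} with hs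
  have hnull (a : ℂ) : ∀ᵐ y : ℂ, 1 + a * y ≠ 0 := by
    filter_upwards [Measure.ae_ne volume (-1 / a)] with y hy h
    apply hy
    have ha : a ≠ 0 := by rintro rfl; simp at h
    field_simp
    linear_combination h
  have hsm : MeasurableSet s := (isOpen_ne_fun (by fun_prop) (by fun_prop)).measurableSet
  have hsu : s =ᵐ[volume] Set.univ := eventuallyEq_univ.mpr (hnull _)
  have hpos : (0 : ℝ) < 1 + ‖x‖ ^ 2 := by positivity
  have hxx : (1 : ℂ) + conj x * x ≠ 0 := by
    rw [mul_comm, Complex.mul_conj, Complex.normSq_eq_norm_sq]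
    exact_mod_cast hpos.ne'
  have himage : φ '' s =ᵐ[volume] Set.univ := by
    refine eventuallyEq_univ.mpr ?_
    filter_upwards [hnull (-conj x)] with w hw
    have hw : 1 - conj x * w ≠ 0 := by rwa [neg_mul, ← sub_eq_add_neg] at hw
    have h1 : 1 + conj x * ((w + x) / (1 - conj x * w)) = (1 + conj x * x) / (1 - conj x * w) := by
      field_simp
      ring
    refine ⟨(w + x) / (1 - conj x * w), ?_, ?_⟩
    · simp only [hs, Set.mem_ofPred_eq, h1]
      exact div_ne_zero hxx hw
    · simp only [hφ, h1]
      rw [div_eq_iff (div_ne_zero hxx hw), mul_div_assoc', eq_div_iff hw, sub_mul,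
        div_mul_cancel₀ _ hw]
      ring
  have hinj : Set.InjOn φ s := by
    intro a ha b hb hab
    have ha : 1 + conj x * a ≠ 0 := ha
    have hb : 1 + conj x * b ≠ 0 := hb
    simp only [hφ] at hab
    rw [div_eq_div_iff ha hb] at hab
    have : (1 + conj x * x) * (a - b) = 0 := by linear_combination hab
    exact sub_eq_zero.mp ((mul_eq_zero.mp this).resolve_left hxx)
  set d : ℂ → ℂ := fun y => (1 + conj x * x) / (1 + conj x * y) ^ 2 with hd
  have hderiv : ∀ y ∈ s, HasFDerivWithinAt φ
      ((ContinuousLinearMap.toSpanSingleton ℂ (d y)).restrictScalars ℝ) s y := by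
    intro y hy
    have hy : 1 + conj x * y ≠ 0 := hy
    have h := ((hasDerivAt_id y).sub_const x).div
      (((hasDerivAt_id y).const_mul (conj x)).const_add 1) hy
    have h' : HasDerivAt φ (d y) y := by
      refine h.congr_deriv ?_
      simp only [hd, id]
      congr 1
      ring
    exact (h'.hasFDerivAt.restrictScalars ℝ).hasFDerivWithinAt
  have hdet (y : ℂ) : ((ContinuousLinearMap.toSpanSingleton ℂ (d y)).restrictScalars ℝ).det
      = ‖d y‖ ^ 2 := by
    rw [ContinuousLinearMap.det, ContinuousLinearMap.coe_restrictScalars,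
      LinearMap.det_restrictScalars]
    simp [Algebra.norm_complex_apply, Complex.normSq_eq_norm_sq]
  symm
  calc _ = ∫⁻ w in φ '' s, ENNReal.ofReal (1 / (π * (1 + ‖w‖ ^ 2) ^ 2)) *
          G (‖w‖ ^ 2 / (1 + ‖w‖ ^ 2)) := by
        rw [setLIntegral_congr himage, setLIntegral_univ]
    _ = ∫⁻ y in s, _ := lintegral_image_eq_lintegral_abs_det_fderiv_mul volume hsm hderiv hinj _
    _ = ∫⁻ y in s, ENNReal.ofReal (1 / (π * (1 + ‖y‖ ^ 2) ^ 2)) *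
        G (‖x - y‖ ^ 2 / ((1 + ‖x‖ ^ 2) * (1 + ‖y‖ ^ 2))) := by
        refine setLIntegral_congr_fun hsm fun y hy => ?_
        have hy : 1 + conj x * y ≠ 0 := hy
        have hy0 : 0 < ‖1 + conj x * y‖ := norm_pos_iff.mpr hy
        have hkey : ‖1 + conj x * y‖ ^ 2 + ‖x - y‖ ^ 2 = (1 + ‖x‖ ^ 2) * (1 + ‖y‖ ^ 2) := by
          simp only [← Complex.normSq_eq_norm_sq, Complex.normSq_apply]
          simp
          ring
        have hw : ‖φ y‖ ^ 2 = ‖x - y‖ ^ 2 / ‖1 + conj x * y‖ ^ 2 := by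
          simp only [hφ, norm_div, div_pow, norm_sub_rev]
        have hdn : ‖d y‖ ^ 2 = (1 + ‖x‖ ^ 2) ^ 2 / (‖1 + conj x * y‖ ^ 2) ^ 2 := by
          have : ‖(1 : ℂ) + conj x * x‖ = 1 + ‖x‖ ^ 2 := by
            rw [mul_comm, Complex.mul_conj, Complex.normSq_eq_norm_sq]
            exact_mod_cast Complex.norm_of_nonneg hpos.le
          simp only [hd, norm_div, div_pow, norm_pow, this]
        have h1w : 1 + ‖φ y‖ ^ 2 = (1 + ‖x‖ ^ 2) * (1 + ‖y‖ ^ 2) / ‖1 + conj x * y‖ ^ 2 := by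
          rw [hw, ← hkey, add_div, div_self (by positivity)]
        have hpi := pi_pos
        simp only [hdet]
        rw [← mul_assoc, ← ENNReal.ofReal_mul (by positivity), abs_of_nonneg (by positivity), h1w,
          hw, hdn]
        generalize ‖1 + conj x * y‖ = N at hy0
        congr 2
        · field_simp
        · field_simp
    _ = _ := by rw [setLIntegral_congr hsu, setLIntegral_univ]

lemma measurable_chord_right (x : E2) : Measurable (chord x) :=
  (continuous_chord.comp (Continuous.prodMk_right x)).measurable

/-- Under `μ`, the chordal distance to any fixed point is uniformly distributed on `(0, 1)`. -/
lemma map_chord_withDensity (x : E2) :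
    ((volume : Measure E2).withDensity fun y => ENNReal.ofReal (mu2 y)).map (chord x)
      = volume.restrict (Set.Ioo 0 1) := by
  have hc := measurable_chord_right x
  have hmu : Measurable fun y => ENNReal.ofReal (mu2 y) := by fun_prop
  refine Measure.ext_of_lintegral _ fun G hG => ?_
  rw [lintegral_map hG hc,
    lintegral_withDensity_eq_lintegral_mul (g := fun y => G (chord x y)) _ hmu (hG.comp hc)]
  set e := Complex.orthonormalBasisOneI.repr with he
  rw [← lintegral_radial_complex hG, ← lintegral_mobius_complex (e.symm x),
    ← Complex.orthonormalBasisOneI.measurePreserving_repr.lintegral_comp_emb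
      Complex.orthonormalBasisOneI.repr.toHomeomorph.measurableEmbedding]
  refine lintegral_congr fun y => ?_
  have h1 : ‖x - e y‖ = ‖e.symm x - y‖ := by
    rw [← e.norm_map (e.symm x - y), map_sub, e.apply_symm_apply]
  have h2 : ‖e.symm x‖ = ‖x‖ := e.symm.norm_map x
  have h3 : ‖e y‖ = ‖y‖ := e.norm_map y
  simp only [Pi.mul_apply, mu2, chord, ← he, h1, h2, h3]

lemma integrable_mu2_mul_comp_chord (x : E2) {G : ℝ → ℝ} (hG : Measurable G)
    (hi : IntegrableOn G (Set.Ioo 0 1)) : Integrable fun y => mu2 y * G (chord x y) := by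
  rw [IntegrableOn, ← map_chord_withDensity x,
    integrable_map_measure hG.aestronglyMeasurable (measurable_chord_right x).aemeasurable,
    integrable_withDensity_iff_integrable_smul' (by fun_prop) (by simp)] at hi
  refine hi.congr (.of_forall fun y => ?_)
  simp [ENNReal.toReal_ofReal (mu2_pos y).le]

lemma integral_mu2_mul_comp_chord (x : E2) {G : ℝ → ℝ} (hG : Measurable G) :
    ∫ y, mu2 y * G (chord x y) = ∫ r in Set.Ioo 0 1, G r := by
  rw [← map_chord_withDensity x,
    integral_map (measurable_chord_right x).aemeasurable hG.aestronglyMeasurable,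
    integral_withDensity_eq_integral_toReal_smul (by fun_prop) (by simp)]
  refine integral_congr_ae (.of_forall fun y => ?_)
  simp [ENNReal.toReal_ofReal (mu2_pos y).le]

lemma integrable_mu2 : Integrable mu2 := by
  simpa using integrable_mu2_mul_comp_chord 0 (G := fun _ => 1) measurable_const (by simp)

lemma integral_mu2 : ∫ y, mu2 y = 1 := by
  simpa using integral_mu2_mul_comp_chord 0 (G := fun _ => 1) measurable_const

lemma integrable_mul_mu2_mul_comp_chord {f : E2 → ℝ} (hf : Integrable f) {G : ℝ → ℝ}
    (hG : Measurable G) (hi : IntegrableOn G (Set.Ioo 0 1)) :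
    Integrable fun p : E2 × E2 => f p.1 * mu2 p.2 * G (chord p.1 p.2) := by
  have hm : AEStronglyMeasurable (fun p : E2 × E2 => f p.1 * mu2 p.2 * G (chord p.1 p.2))
      ((volume : Measure E2).prod volume) :=
    (hf.aestronglyMeasurable.comp_fst.mul (by fun_prop)).mul
      (hG.comp continuous_chord.measurable).aestronglyMeasurable
  refine (integrable_prod_iff hm).mpr ⟨.of_forall fun x => ?_, ?_⟩
  · simpa only [mul_assoc] using (integrable_mu2_mul_comp_chord x hG hi).const_mul (f x)
  · have h (x : E2) : ∫ y, ‖f x * mu2 y * G (chord x y)‖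
        = ‖f x‖ * ∫ r in Set.Ioo 0 1, |G r| := by
      rw [← integral_mu2_mul_comp_chord x (G := fun r => |G r|) (by fun_prop), ← integral_const_mul]
      refine integral_congr_ae (.of_forall fun y => ?_)
      simp only [norm_mul, norm_eq_abs, abs_of_pos (mu2_pos y), mul_assoc]
    simp only [h]
    exact hf.norm.mul_const _

lemma integral_mul_mu2_mul_comp_chord {f : E2 → ℝ} (hf : Integrable f) {G : ℝ → ℝ}
    (hG : Measurable G) (hi : IntegrableOn G (Set.Ioo 0 1)) :
    ∫ p : E2 × E2, f p.1 * mu2 p.2 * G (chord p.1 p.2)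
      = (∫ x, f x) * ∫ r in Set.Ioo 0 1, G r := by
  rw [Measure.volume_eq_prod, integral_prod _ (integrable_mul_mu2_mul_comp_chord hf hG hi),
    ← integral_mul_const]
  refine integral_congr_ae (.of_forall fun x => ?_)
  simp only [mul_assoc, integral_const_mul, integral_mu2_mul_comp_chord x hG]

/-- Centering a chordal energy at `μ`. -/
lemma energy_sub_mu2 {f : E2 → ℝ} (hf : Integrable f) (hmass : ∫ x, f x = 1) {G : ℝ → ℝ}
    (hG : Measurable G) (hi : IntegrableOn G (Set.Ioo 0 1))
    (hff : Integrable fun p : E2 × E2 => f p.1 * f p.2 * G (chord p.1 p.2)) :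
    Integrable (fun p : E2 × E2 => (f p.1 - mu2 p.1) * (f p.2 - mu2 p.2) * G (chord p.1 p.2)) ∧
    ∫ p : E2 × E2, (f p.1 - mu2 p.1) * (f p.2 - mu2 p.2) * G (chord p.1 p.2)
      = (∫ p : E2 × E2, f p.1 * f p.2 * G (chord p.1 p.2)) - ∫ r in Set.Ioo 0 1, G r := by
  have h1 := integrable_mul_mu2_mul_comp_chord hf hG hi
  have h2 := integrable_mul_mu2_mul_comp_chord integrable_mu2 hG hi
  have h3 : Integrable fun p : E2 × E2 => f p.2 * mu2 p.1 * G (chord p.2 p.1) := h1.swap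
  have e3 : ∫ p : E2 × E2, f p.2 * mu2 p.1 * G (chord p.2 p.1) = ∫ r in Set.Ioo 0 1, G r := by
    have := integral_prod_swap (μ := (volume : Measure E2)) (ν := (volume : Measure E2))
      (fun p : E2 × E2 => f p.1 * mu2 p.2 * G (chord p.1 p.2))
    simp only [Prod.fst_swap, Prod.snd_swap, ← Measure.volume_eq_prod] at this
    rw [this, integral_mul_mu2_mul_comp_chord hf hG hi, hmass, one_mul]
  have key (p : E2 × E2) : (f p.1 - mu2 p.1) * (f p.2 - mu2 p.2) * G (chord p.1 p.2)
      = f p.1 * f p.2 * G (chord p.1 p.2) - f p.1 * mu2 p.2 * G (chord p.1 p.2)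
        - f p.2 * mu2 p.1 * G (chord p.2 p.1) + mu2 p.1 * mu2 p.2 * G (chord p.1 p.2) := by
    rw [chord_comm p.2 p.1]; ring
  simp only [key]
  have h4 : Integrable fun p : E2 × E2 =>
      f p.1 * f p.2 * G (chord p.1 p.2) - f p.1 * mu2 p.2 * G (chord p.1 p.2) := hff.sub h1
  have h5 : Integrable fun p : E2 × E2 => f p.1 * f p.2 * G (chord p.1 p.2)
      - f p.1 * mu2 p.2 * G (chord p.1 p.2) - f p.2 * mu2 p.1 * G (chord p.2 p.1) := h4.sub h3
  refine ⟨h5.add h2, ?_⟩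
  rw [integral_add h5 h2, integral_sub h4 h3, integral_sub hff h1, e3,
    integral_mul_mu2_mul_comp_chord hf hG hi, integral_mul_mu2_mul_comp_chord integrable_mu2 hG hi,
    hmass, integral_mu2]
  ring

lemma abs_one_sub_two_mul_chord_le (x y : E2) : |1 - 2 * chord x y| ≤ 1 := by
  rw [abs_le]
  constructor <;> linarith [chord_nonneg x y, chord_le_one x y]

lemma integral_inner_pow_nonneg {h : E2 → ℝ} (hh : Integrable h) (n : ℕ) :
    0 ≤ ∫ p : E2 × E2, h p.1 * h p.2 * (1 - 2 * chord p.1 p.2) ^ n := by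
  have hb (w : Fin n → Fin 3) : Integrable fun x => h x * ∏ j, stereo x (w j) := by
    refine hh.mul_bdd (c := 1) (by fun_prop) (.of_forall fun x => ?_)
    rw [norm_prod]
    exact Finset.prod_le_one (fun _ _ => norm_nonneg _) fun j _ => abs_stereo_le_one x (w j)
  have key (p : E2 × E2) : h p.1 * h p.2 * (1 - 2 * chord p.1 p.2) ^ n
      = ∑ w : Fin n → Fin 3, (h p.1 * ∏ j, stereo p.1 (w j)) * (h p.2 * ∏ j, stereo p.2 (w j)) := by
    rw [← sum_stereo_mul, Fintype.sum_pow, Finset.mul_sum]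
    refine Finset.sum_congr rfl fun w _ => ?_
    rw [Finset.prod_mul_distrib]
    ring
  simp only [key]
  rw [Measure.volume_eq_prod, integral_finsetSum _ fun w _ => (hb w).mul_prod (hb w)]
  refine Finset.sum_nonneg fun w _ => ?_
  rw [integral_prod_mul (fun x => h x * ∏ j, stereo x (w j)) fun x => h x * ∏ j, stereo x (w j)]
  exact mul_self_nonneg _

/-- A power series with nonnegative coefficients in the inner product of the stereographic images
is a positive semidefinite kernel (Schur), away from the boundary of convergence. -/
lemma integral_powerSeries_nonneg {h : E2 → ℝ} (hh : Integrable h) {c : ℕ → ℝ} (hc : ∀ n, 0 ≤ c n)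
    {φ : ℝ → ℝ} (hφ : ∀ x, |x| < 1 → HasSum (fun n => c n * x ^ n) (φ x)) {r : ℝ} (h0 : 0 ≤ r)
    (h1 : r < 1) :
    0 ≤ ∫ p : E2 × E2, h p.1 * h p.2 * φ (r * (1 - 2 * chord p.1 p.2)) := by
  have hh2 : Integrable fun p : E2 × E2 => h p.1 * h p.2 := hh.mul_prod hh
  set F : ℕ → E2 × E2 → ℝ := fun n p =>
    h p.1 * h p.2 * (c n * (r * (1 - 2 * chord p.1 p.2)) ^ n) with hF
  have hbd (n : ℕ) (p : E2 × E2) : ‖c n * (r * (1 - 2 * chord p.1 p.2)) ^ n‖ ≤ c n * r ^ n := by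
    rw [norm_mul, norm_pow, norm_mul, norm_eq_abs, norm_eq_abs, norm_eq_abs, abs_of_nonneg (hc n),
      abs_of_nonneg h0]
    have := abs_one_sub_two_mul_chord_le p.1 p.2
    gcongr
    · exact hc n
    · exact mul_le_of_le_one_right h0 this
  have hFi (n : ℕ) : Integrable (F n) :=
    hh2.mul_bdd (c := c n * r ^ n) (by fun_prop) (.of_forall (hbd n))
  have hsum : Summable fun n => c n * r ^ n := (hφ r (by rwa [abs_of_nonneg h0])).summable
  have hs : Summable fun n => ∫ p, ‖F n p‖ := by
    refine Summable.of_nonneg_of_le (fun n => by positivity) (fun n => ?_)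
      (hsum.mul_left (∫ p : E2 × E2, ‖h p.1 * h p.2‖))
    rw [← integral_mul_const]
    refine integral_mono (hFi n).norm (hh2.norm.mul_const _) fun p => ?_
    simp only [hF]
    rw [norm_mul (h p.1 * h p.2)]
    gcongr
    exact hbd n p
  have hlim := hasSum_integral_of_summable_integral_norm hFi hs
  have e : ∫ p, ∑' n, F n p = ∫ p : E2 × E2, h p.1 * h p.2 * φ (r * (1 - 2 * chord p.1 p.2)) := by
    refine integral_congr_ae (.of_forall fun p => ?_)
    have hx : |r * (1 - 2 * chord p.1 p.2)| < 1 := by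
      rw [abs_mul, abs_of_nonneg h0]
      exact (mul_le_of_le_one_right h0 (abs_one_sub_two_mul_chord_le p.1 p.2)).trans_lt h1
    simp only [hF, tsum_mul_left, (hφ _ hx).tsum_eq]
  rw [← e]
  refine hlim.nonneg fun n => ?_
  have : F n = fun p => (c n * r ^ n) * (h p.1 * h p.2 * (1 - 2 * chord p.1 p.2) ^ n) := by
    funext p; simp only [hF, mul_pow]; ring
  rw [this, integral_const_mul]
  exact mul_nonneg (mul_nonneg (hc n) (pow_nonneg h0 n)) (integral_inner_pow_nonneg hh n)

/-- Positive semidefiniteness up to the boundary, under a domination hypothesis. -/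
lemma integral_powerSeries_nonneg_of_dominated {h : E2 → ℝ} (hh : Integrable h) {c : ℕ → ℝ}
    (hc : ∀ n, 0 ≤ c n) {φ : ℝ → ℝ} (hφ : ∀ x, |x| < 1 → HasSum (fun n => c n * x ^ n) (φ x))
    (hm : Measurable φ) (hcont : ∀ x < 1, ContinuousAt φ x) {b : E2 × E2 → ℝ} (hb : Integrable b)
    (hdom : ∀ r ∈ Set.Ioo (0 : ℝ) 1, ∀ p : E2 × E2, p.1 ≠ p.2 →
      |h p.1 * h p.2 * φ (r * (1 - 2 * chord p.1 p.2))| ≤ b p) :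
    0 ≤ ∫ p : E2 × E2, h p.1 * h p.2 * φ (1 - 2 * chord p.1 p.2) := by
  have hlt : ∀ᶠ r : ℝ in nhdsWithin 1 (Set.Iio 1), r ∈ Set.Ioo (0 : ℝ) 1 :=
    Ioo_mem_nhdsLT one_pos
  have hlim : Tendsto (fun r : ℝ => ∫ p : E2 × E2, h p.1 * h p.2 * φ (r * (1 - 2 * chord p.1 p.2)))
      (nhdsWithin 1 (Set.Iio 1))
      (nhds (∫ p : E2 × E2, h p.1 * h p.2 * φ (1 - 2 * chord p.1 p.2))) := by
    refine tendsto_integral_filter_of_dominated_convergence b ?_ ?_ hb ?_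
    · refine .of_forall fun r => ?_
      have : AEStronglyMeasurable (fun p : E2 × E2 => h p.1 * h p.2) volume :=
        (hh.mul_prod hh).aestronglyMeasurable
      exact this.mul (hm.comp (by fun_prop)).aestronglyMeasurable
    · filter_upwards [hlt] with r hr
      filter_upwards [ae_fst_ne_snd] with p hp using hdom r hr p hp
    · filter_upwards [ae_fst_ne_snd] with p hp
      have hx : 1 - 2 * chord p.1 p.2 < 1 := by linarith [chord_pos hp]
      refine Tendsto.const_mul _ ?_
      have h2 : Tendsto (fun r : ℝ => r * (1 - 2 * chord p.1 p.2)) (nhdsWithin 1 (Set.Iio 1))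
          (nhds (1 - 2 * chord p.1 p.2)) := by
        have : ContinuousAt (fun r : ℝ => r * (1 - 2 * chord p.1 p.2)) 1 := by fun_prop
        simpa [ContinuousAt] using this.tendsto.mono_left nhdsWithin_le_nhds
      exact (hcont _ hx).tendsto.comp h2
  refine ge_of_tendsto hlim ?_
  filter_upwards [hlt] with r hr
  exact integral_powerSeries_nonneg hh hc hφ hr.1.le hr.2

lemma hasSum_neg_log_one_sub {x : ℝ} (hx : |x| < 1) :
    HasSum (fun n : ℕ => (1 / n : ℝ) * x ^ n) (-log (1 - x)) := by
  have h := hasSum_pow_div_log_of_abs_lt_one hx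
  rw [← hasSum_nat_add_iff' 1]
  simp only [Finset.sum_range_one, Nat.cast_zero, div_zero, zero_mul, sub_zero]
  refine h.congr_fun fun n => ?_
  push_cast
  ring

lemma hasSum_one_sub_mul_log_add {x : ℝ} (hx : |x| < 1) :
    HasSum (fun n : ℕ => (1 / (n * (n - 1)) : ℝ) * x ^ n) ((1 - x) * log (1 - x) + x) := by
  have h := hasSum_pow_div_log_of_abs_lt_one hx
  have h1 := (hasSum_nat_add_iff' 1).mpr h
  have h2 := (h.mul_left x).sub h1
  rw [← hasSum_nat_add_iff' 2]
  simp only [Finset.sum_range_succ, Finset.sum_range_zero, Nat.cast_zero, Nat.cast_one, sub_self,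
    mul_zero, zero_mul, div_zero, zero_add, sub_zero]
  simp only [Finset.sum_range_one, Nat.cast_zero, zero_add, pow_one, div_one] at h2
  convert h2 using 1
  · funext n
    push_cast
    have : (n : ℝ) + 1 ≠ 0 := by positivity
    have : (n : ℝ) + 2 ≠ 0 := by positivity
    have : (n : ℝ) + 1 + 1 ≠ 0 := by positivity
    have e : (n : ℝ) + 2 - 1 = n + 1 := by ring
    rw [e]
    field_simp
    ring
  · ring

/-- The logarithmic kernel is negative semidefinite on functions of vanishing integral. -/
lemma integral_log_chord_nonpos {h : E2 → ℝ} (hh : Integrable h) (h0 : ∫ x, h x = 0)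
    (hi : Integrable fun p : E2 × E2 => h p.1 * h p.2 * log (chord p.1 p.2)) :
    ∫ p : E2 × E2, h p.1 * h p.2 * log (chord p.1 p.2) ≤ 0 := by
  have hh2 : Integrable fun p : E2 × E2 => h p.1 * h p.2 := hh.mul_prod hh
  have hpd := integral_powerSeries_nonneg_of_dominated hh (c := fun n : ℕ => (1 / n : ℝ))
    (fun n => by positivity) (φ := fun x => -log (1 - x)) (fun x hx => hasSum_neg_log_one_sub hx)
    (by fun_prop) (fun x hx => by
      have : 1 - x ≠ 0 := by linarith
      fun_prop (disch := assumption))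
    ((hh2.norm.mul_const (log 2)).add hi.norm) (fun r hr p hp => by
      have hc := chord_pos hp
      have hc1 := chord_le_one p.1 p.2
      have hl := log_chord_nonpos p.1 p.2
      have hl2 : 0 < log 2 := log_pos one_lt_two
      have hr0 := hr.1
      have hr1 := hr.2
      simp only [Pi.add_apply, norm_eq_abs]
      rw [abs_mul (h p.1 * h p.2) (-log _), abs_mul (h p.1 * h p.2) (log _), ← mul_add]
      gcongr
      rw [abs_neg, abs_of_nonpos hl, abs_le]
      constructor
      · have h1 : log (chord p.1 p.2) ≤ log (1 - r * (1 - 2 * chord p.1 p.2)) :=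
          log_le_log hc (by nlinarith)
        linarith
      · have h1 : log (1 - r * (1 - 2 * chord p.1 p.2)) ≤ log 2 :=
          log_le_log (by nlinarith) (by nlinarith)
        linarith)
  have e : ∫ p : E2 × E2, h p.1 * h p.2 * (fun x => -log (1 - x)) (1 - 2 * chord p.1 p.2)
      = -(∫ p : E2 × E2, h p.1 * h p.2 * log (chord p.1 p.2)) := by
    have hmass : ∫ p : E2 × E2, h p.1 * h p.2 = 0 := by
      rw [Measure.volume_eq_prod, integral_prod_mul h h, h0, zero_mul]
    have e1 : ∫ p : E2 × E2, (h p.1 * h p.2 * log 2 + h p.1 * h p.2 * log (chord p.1 p.2))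
        = ∫ p : E2 × E2, h p.1 * h p.2 * log (chord p.1 p.2) := by
      rw [integral_add (hh2.mul_const _) hi, integral_mul_const, hmass, zero_mul, zero_add]
    rw [← e1, ← integral_neg]
    refine integral_congr_ae ?_
    filter_upwards [ae_fst_ne_snd] with p hp
    have : 1 - (1 - 2 * chord p.1 p.2) = 2 * chord p.1 p.2 := by ring
    simp only [this]
    rw [log_mul two_ne_zero (chord_pos hp).ne']
    ring
  linarith [e ▸ hpd]

lemma integral_one_sub_mul_log_nonneg {h : E2 → ℝ} (hh : Integrable h) :
    0 ≤ ∫ p : E2 × E2, h p.1 * h p.2 *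
      (2 * chord p.1 p.2 * log (2 * chord p.1 p.2) + (1 - 2 * chord p.1 p.2)) := by
  have hh2 : Integrable fun p : E2 × E2 => h p.1 * h p.2 := hh.mul_prod hh
  have hpd := integral_powerSeries_nonneg_of_dominated hh
    (c := fun n : ℕ => (1 / (n * (n - 1)) : ℝ))
    (fun n => by
      rcases n with _ | n
      · simp
      · push_cast; rw [add_sub_cancel_right]; positivity)
    (φ := fun x => (1 - x) * log (1 - x) + x) (fun x hx => hasSum_one_sub_mul_log_add hx)
    (by fun_prop) (fun x hx => by
      have : 1 - x ≠ 0 := by linarith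
      fun_prop (disch := assumption))
    (hh2.norm.mul_const 3) (fun r hr p hp => by
      have hc := chord_pos hp
      have hc1 := chord_le_one p.1 p.2
      have hr0 := hr.1
      have hr1 := hr.2
      rw [abs_mul, norm_eq_abs]
      gcongr
      set x := r * (1 - 2 * chord p.1 p.2) with hx
      have hx1 : x < 1 := by nlinarith
      have hx2 : -1 < x := by nlinarith
      have hy : 0 < 1 - x := by linarith
      have hlow := one_sub_inv_le_log_of_pos hy
      have hup := log_le_sub_one_of_pos hy
      have hinv : (1 - x) * (1 - x)⁻¹ = 1 := mul_inv_cancel₀ hy.ne'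
      rw [abs_le]
      constructor <;> nlinarith)
  simpa using hpd

lemma setIntegral_Ioo_eq_interval (G : ℝ → ℝ) :
    ∫ r in Set.Ioo (0 : ℝ) 1, G r = ∫ r in (0 : ℝ)..1, G r := by
  rw [intervalIntegral.integral_of_le zero_le_one, integral_Ioc_eq_integral_Ioo]

lemma integrableOn_log_Ioo : IntegrableOn log (Set.Ioo 0 1) :=
  ((intervalIntegrable_iff_integrableOn_Ioo_of_le zero_le_one).mp
    intervalIntegral.intervalIntegrable_log')

lemma integral_log_Ioo : ∫ r in Set.Ioo (0 : ℝ) 1, log r = -1 := by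
  rw [setIntegral_Ioo_eq_interval, integral_log]
  simp

lemma integral_two_mul_mul_log_Ioo :
    ∫ r in Set.Ioo (0 : ℝ) 1, (2 * r * log (2 * r) + (1 - 2 * r)) = log 2 - 1 / 2 := by
  rw [setIntegral_Ioo_eq_interval]
  have hc : Continuous fun r : ℝ => 2 * r * log (2 * r) :=
    continuous_mul_log.comp (continuous_const.mul continuous_id)
  rw [intervalIntegral.integral_eq_sub_of_hasDerivAt_of_le zero_le_one
    (f := fun r => r / 2 * (2 * r * log (2 * r)) + r - 3 / 2 * r ^ 2) (by fun_prop)]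
  · norm_num
    ring
  · intro r hr
    have hr0 : r ≠ 0 := hr.1.ne'
    have hl : HasDerivAt (fun r => log (2 * r)) (2 / (2 * r)) r := by
      simpa using ((hasDerivAt_id r).const_mul 2).log (by simpa using hr0)
    have h := ((((hasDerivAt_id r).div_const 2).mul
      (((hasDerivAt_id r).const_mul 2).mul hl)).add (hasDerivAt_id r)).sub
      ((hasDerivAt_pow 2 r).const_mul (3 / 2))
    refine h.congr_deriv ?_
    simp
    field_simp
    ring
  · exact (hc.add (by fun_prop)).intervalIntegrable _ _

/-- Probability densities for which the entropy, the logarithmic moment and the logarithmic energy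
are all finite. -/
structure IsFiniteEnergyDensity (f : E2 → ℝ) : Prop where
  measurable : Measurable f
  nonneg : ∀ x, 0 ≤ f x
  integrable : Integrable f
  mass : ∫ x, f x = 1
  entropy : Integrable fun x => f x * log (f x)
  moment : Integrable fun x => f x * log (1 + ‖x‖ ^ 2)
  energy : Integrable fun p : E2 × E2 => f p.1 * f p.2 * log (chord p.1 p.2)

/-- The relative entropy of a probability density `f` with respect to `μ`. -/
def relEntropy (f : E2 → ℝ) : ℝ :=
  (∫ x, f x * log (f x)) + 2 * (∫ x, f x * log (1 + ‖x‖ ^ 2)) + log π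

/-- The logarithmic chordal energy of `f`. -/
def chordEnergy (f : E2 → ℝ) : ℝ := ∫ p : E2 × E2, f p.1 * f p.2 * log (chord p.1 p.2)

lemma sub_le_mul_log_sub_log {a b : ℝ} (ha : 0 ≤ a) (hb : 0 < b) :
    a - b ≤ a * (log a - log b) := by
  rcases ha.eq_or_lt with rfl | ha
  · simpa using hb.le
  · have h := one_sub_inv_le_log_of_pos (div_pos ha hb)
    rw [log_div ha.ne' hb.ne', inv_div] at h
    calc a - b = a * (1 - b / a) := by field_simp
      _ ≤ _ := by gcongr

lemma eq_of_mul_log_sub_log_eq {a b : ℝ} (ha : 0 ≤ a) (hb : 0 < b)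
    (h : a * (log a - log b) = a - b) : a = b := by
  rcases ha.eq_or_lt with rfl | ha
  · simp at h; linarith
  · by_contra hne
    have h1 : b / a ≠ 1 := fun h' => hne ((div_eq_one_iff_eq ha.ne').mp h').symm
    have h2 := log_lt_sub_one_of_pos (div_pos hb ha) h1
    rw [log_div hb.ne' ha.ne'] at h2
    have h3 : a * (log b - log a) < a * (b / a - 1) := by gcongr
    have h4 : a * (b / a - 1) = b - a := by field_simp
    linarith

namespace IsFiniteEnergyDensity

variable {f : E2 → ℝ}

lemma integrable_relEntropy (hf : IsFiniteEnergyDensity f) :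
    Integrable fun x => f x * (log (f x) - log (mu2 x)) := by
  refine ((hf.entropy.add (hf.moment.const_mul 2)).add (hf.integrable.mul_const (log π))).congr
    (.of_forall fun x => ?_)
  simp only [Pi.add_apply, log_mu2]
  ring

lemma relEntropy_eq (hf : IsFiniteEnergyDensity f) :
    relEntropy f = ∫ x, f x * (log (f x) - log (mu2 x)) := by
  have h1 : ∫ x, f x * (log (f x) - log (mu2 x))
      = ∫ x, (f x * log (f x) + 2 * (f x * log (1 + ‖x‖ ^ 2)) + f x * log π) := by
    refine integral_congr_ae (.of_forall fun x => ?_)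
    simp only [log_mu2]
    ring
  have h2 : Integrable fun x => f x * log (f x) + 2 * (f x * log (1 + ‖x‖ ^ 2)) :=
    hf.entropy.add (hf.moment.const_mul 2)
  rw [h1, integral_add h2 (hf.integrable.mul_const _),
    integral_add hf.entropy (hf.moment.const_mul 2), integral_const_mul, integral_mul_const,
    hf.mass, one_mul, relEntropy]

lemma relEntropy_nonneg (hf : IsFiniteEnergyDensity f) : 0 ≤ relEntropy f := by
  have h := integral_mono (hf.integrable.sub integrable_mu2) hf.integrable_relEntropy
    fun x => sub_le_mul_log_sub_log (hf.nonneg x) (mu2_pos x)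
  rw [← hf.relEntropy_eq] at h
  simp only [Pi.sub_apply] at h
  rwa [integral_sub hf.integrable integrable_mu2, hf.mass, integral_mu2, sub_self] at h

lemma ae_eq_mu2_of_relEntropy_eq_zero (hf : IsFiniteEnergyDensity f) (h : relEntropy f = 0) :
    f =ᵐ[volume] mu2 := by
  have hd : Integrable fun x => f x - mu2 x := hf.integrable.sub integrable_mu2
  have hi := hf.integrable_relEntropy.sub hd
  have h0 : ∫ x, (f x * (log (f x) - log (mu2 x)) - (f x - mu2 x)) = 0 := by
    rw [integral_sub hf.integrable_relEntropy hd, ← hf.relEntropy_eq, h,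
      integral_sub hf.integrable integrable_mu2, hf.mass, integral_mu2]
    ring
  have h1 := (integral_eq_zero_iff_of_nonneg (fun x => sub_nonneg.mpr
    (sub_le_mul_log_sub_log (hf.nonneg x) (mu2_pos x))) hi).mp h0
  filter_upwards [h1] with x hx
  exact eq_of_mul_log_sub_log_eq (hf.nonneg x) (mu2_pos x) (sub_eq_zero.mp hx)

lemma chordEnergy_le (hf : IsFiniteEnergyDensity f) : chordEnergy f ≤ -1 := by
  obtain ⟨h1, h2⟩ := energy_sub_mu2 hf.integrable hf.mass measurable_log integrableOn_log_Ioo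
    hf.energy
  have h3 := integral_log_chord_nonpos (hf.integrable.sub integrable_mu2)
    (by simp only [Pi.sub_apply]
        rw [integral_sub hf.integrable integrable_mu2, hf.mass, integral_mu2, sub_self]) h1
  simp only [Pi.sub_apply] at h3
  rw [h2, integral_log_Ioo] at h3
  rw [chordEnergy]
  linarith

/-- The subcritical logarithmic Hardy–Littlewood–Sobolev inequality, from the Gibbs variational
principle applied at each point. -/
lemma log_one_sub_le (hf : IsFiniteEnergyDensity f) {c : ℝ} (h1 : c < 1) :
    log (1 - c) ≤ relEntropy f + c * chordEnergy f := by
  have hc1 : 0 < 1 - c := by linarith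
  have hpow : IntegrableOn (fun r : ℝ => r ^ (-c)) (Set.Ioo 0 1) :=
    (intervalIntegrable_iff_integrableOn_Ioo_of_le zero_le_one).mp
      (intervalIntegral.intervalIntegrable_rpow' (by linarith))
  have hpow_val : ∫ r in Set.Ioo (0 : ℝ) 1, r ^ (-c) = (1 - c)⁻¹ := by
    rw [setIntegral_Ioo_eq_interval, integral_rpow (Or.inl (by linarith)), one_rpow,
      zero_rpow (by linarith), sub_zero, one_div, neg_add_eq_sub]
  have hsec : ∀ᵐ y : E2, 0 ≤ f y * relEntropy f
      + c * (∫ x, f y * f x * log (chord y x)) - f y * log (1 - c) := by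
    filter_upwards [hf.energy.prod_right_ae] with y hy
    set g : E2 → ℝ := fun x => mu2 x * chord y x ^ (-c) with hg
    have hgi : Integrable g :=
      integrable_mu2_mul_comp_chord y (G := fun r : ℝ => r ^ (-c)) (by fun_prop) hpow
    have hgv : ∫ x, g x = (1 - c)⁻¹ := by
      rw [← hpow_val]
      exact integral_mu2_mul_comp_chord y (G := fun r : ℝ => r ^ (-c)) (by fun_prop)
    have i1 := hf.integrable_relEntropy.const_mul (f y)
    have i2 := hy.const_mul c
    have i3 := hf.integrable.mul_const (f y * log (1 - c))
    have i12 : Integrable fun x => f y * (f x * (log (f x) - log (mu2 x)))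
        + c * (f y * f x * log (chord y x)) := i1.add i2
    have hle := integral_mono_ae ((hf.integrable.const_mul (f y)).sub
      ((hgi.const_mul (1 - c)).const_mul (f y))) (i12.sub i3) (by
        filter_upwards [Measure.ae_ne volume y] with x hx
        have hcp := chord_pos hx.symm
        have hgp : 0 < chord y x ^ (-c) := rpow_pos_of_pos hcp _
        have hm := mu2_pos x
        have hpt := sub_le_mul_log_sub_log (hf.nonneg x) (b := (1 - c) * g x)
          (mul_pos hc1 (mul_pos hm hgp))
        have hlog : log ((1 - c) * g x)
            = log (1 - c) + log (mu2 x) - c * log (chord y x) := by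
          rw [hg, log_mul hc1.ne' (mul_pos hm hgp).ne', log_mul hm.ne' hgp.ne', log_rpow hcp]
          ring
        rw [hlog] at hpt
        have := mul_le_mul_of_nonneg_left hpt (hf.nonneg y)
        simp only [Pi.sub_apply]
        linarith)
    simp only [Pi.sub_apply] at hle
    rw [integral_sub (hf.integrable.const_mul (f y)) ((hgi.const_mul (1 - c)).const_mul (f y)),
      integral_sub i12 i3, integral_add i1 i2] at hle
    simp only [integral_const_mul, integral_mul_const] at hle
    rw [hgv, hf.mass, mul_inv_cancel₀ hc1.ne', sub_self, ← hf.relEntropy_eq, one_mul] at hle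
    exact hle
  have hint : ∫ y, ∫ x, f y * f x * log (chord y x) = chordEnergy f := by
    rw [chordEnergy, Measure.volume_eq_prod, integral_prod _ hf.energy]
  have j1 := hf.integrable.mul_const (relEntropy f)
  have j2 := hf.energy.integral_prod_left.const_mul c
  have j12 : Integrable fun y => f y * relEntropy f
      + c * (∫ x, f y * f x * log (chord y x)) := j1.add j2
  have j3 := hf.integrable.mul_const (log (1 - c))
  have h := integral_nonneg_of_ae hsec
  rw [integral_sub j12 j3, integral_add j1 j2, integral_mul_const, integral_mul_const,
    integral_const_mul, hint, hf.mass] at h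
  linarith

lemma integrable_prod (hf : IsFiniteEnergyDensity f) :
    Integrable fun p : E2 × E2 => f p.1 * f p.2 := hf.integrable.mul_prod hf.integrable

lemma integral_prod_eq_one (hf : IsFiniteEnergyDensity f) :
    ∫ p : E2 × E2, f p.1 * f p.2 = 1 := by
  rw [Measure.volume_eq_prod, integral_prod_mul f f, hf.mass, one_mul]

lemma integrable_mul_stereo (hf : IsFiniteEnergyDensity f) (i : Fin 3) :
    Integrable fun x => f x * stereo x i :=
  hf.integrable.mul_bdd (c := 1) (by fun_prop) (.of_forall fun x => abs_stereo_le_one x i)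

end IsFiniteEnergyDensity

/-- The centre of mass of the image of `f` on the sphere. -/
def barycenter (f : E2 → ℝ) (i : Fin 3) : ℝ := ∫ x, f x * stereo x i

namespace IsFiniteEnergyDensity

variable {f : E2 → ℝ}

lemma integrable_chord (hf : IsFiniteEnergyDensity f) :
    Integrable fun p : E2 × E2 => f p.1 * f p.2 * chord p.1 p.2 :=
  hf.integrable_prod.mul_bdd (c := 1) (by fun_prop) (.of_forall fun p => by
    rw [norm_eq_abs, abs_of_nonneg (chord_nonneg _ _)]
    exact chord_le_one _ _)

lemma integral_chord (hf : IsFiniteEnergyDensity f) :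
    ∫ p : E2 × E2, f p.1 * f p.2 * chord p.1 p.2 = (1 - ∑ i, barycenter f i ^ 2) / 2 := by
  have key (p : E2 × E2) : f p.1 * f p.2 * chord p.1 p.2 = (f p.1 * f p.2) * (1 / 2)
      - (1 / 2) * ∑ i, (f p.1 * stereo p.1 i) * (f p.2 * stereo p.2 i) := by
    have h := sum_stereo_mul p.1 p.2
    have e : ∑ i, (f p.1 * stereo p.1 i) * (f p.2 * stereo p.2 i)
        = f p.1 * f p.2 * ∑ i, stereo p.1 i * stereo p.2 i := by
      rw [Finset.mul_sum]
      exact Finset.sum_congr rfl fun i _ => by ring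
    rw [e, h]
    ring
  have hi (i : Fin 3) : Integrable fun p : E2 × E2 =>
      (f p.1 * stereo p.1 i) * (f p.2 * stereo p.2 i) :=
    (hf.integrable_mul_stereo i).mul_prod (hf.integrable_mul_stereo i)
  simp only [key]
  rw [integral_sub (hf.integrable_prod.mul_const _)
    ((integrable_finsetSum _ fun i _ => hi i).const_mul _), integral_mul_const, integral_const_mul,
    integral_finsetSum _ fun i _ => hi i, hf.integral_prod_eq_one]
  have (i : Fin 3) : ∫ p : E2 × E2, (f p.1 * stereo p.1 i) * (f p.2 * stereo p.2 i)
      = barycenter f i ^ 2 := by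
    rw [Measure.volume_eq_prod, integral_prod_mul (fun x => f x * stereo x i)
      fun x => f x * stereo x i, barycenter, sq]
  simp only [this]
  ring

lemma integrable_chord_mul_log (hf : IsFiniteEnergyDensity f) :
    Integrable fun p : E2 × E2 => f p.1 * f p.2 * (chord p.1 p.2 * log (chord p.1 p.2)) := by
  refine (hf.energy.mul_bdd (c := 1) (g := fun p => chord p.1 p.2) (by fun_prop)
    (.of_forall fun p => by
      rw [norm_eq_abs, abs_of_nonneg (chord_nonneg _ _)]
      exact chord_le_one _ _)).congr (.of_forall fun p => ?_)
  simp only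
  ring

lemma neg_half_sub_le_integral_chord_mul_log (hf : IsFiniteEnergyDensity f) :
    -(1 / 2) - ∑ i, barycenter f i ^ 2
      ≤ 2 * ∫ p : E2 × E2, f p.1 * f p.2 * (chord p.1 p.2 * log (chord p.1 p.2)) := by
  set G : ℝ → ℝ := fun r => 2 * r * log (2 * r) + (1 - 2 * r) with hG
  have hGc : Continuous G := by
    have : Continuous fun r : ℝ => 2 * r * log (2 * r) :=
      continuous_mul_log.comp (continuous_const.mul continuous_id)
    fun_prop
  have hGi : IntegrableOn G (Set.Ioo 0 1) :=
    (hGc.integrableOn_Icc (a := 0) (b := 1)).mono_set Set.Ioo_subset_Icc_self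
  have i1 := hf.integrable_chord_mul_log.const_mul 2
  have i2 := hf.integrable_chord.const_mul (2 * (log 2 - 1))
  have i12 : Integrable fun p : E2 × E2 =>
      2 * (f p.1 * f p.2 * (chord p.1 p.2 * log (chord p.1 p.2)))
      + 2 * (log 2 - 1) * (f p.1 * f p.2 * chord p.1 p.2) := i1.add i2
  have key : (fun p : E2 × E2 => 2 * (f p.1 * f p.2 * (chord p.1 p.2 * log (chord p.1 p.2)))
      + 2 * (log 2 - 1) * (f p.1 * f p.2 * chord p.1 p.2) + f p.1 * f p.2)
      =ᵐ[volume] fun p : E2 × E2 => f p.1 * f p.2 * G (chord p.1 p.2) := by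
    filter_upwards [ae_fst_ne_snd] with p hp
    simp only [hG]
    rw [log_mul two_ne_zero (chord_pos hp).ne']
    ring
  have hff : Integrable fun p : E2 × E2 => f p.1 * f p.2 * G (chord p.1 p.2) :=
    (i12.add hf.integrable_prod).congr key
  obtain ⟨-, h2⟩ := energy_sub_mu2 hf.integrable hf.mass hGc.measurable hGi hff
  have h3 := integral_one_sub_mul_log_nonneg (hf.integrable.sub integrable_mu2)
  simp only [Pi.sub_apply] at h3
  rw [h2, ← integral_congr_ae key, integral_add i12 hf.integrable_prod, integral_add i1 i2,
    integral_const_mul, integral_const_mul, hf.integral_chord, hf.integral_prod_eq_one,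
    integral_two_mul_mul_log_Ioo] at h3
  have hA : 0 ≤ ∑ i, barycenter f i ^ 2 := Finset.sum_nonneg fun i _ => sq_nonneg _
  have hl : 0 < log 2 := log_pos one_lt_two
  nlinarith

end IsFiniteEnergyDensity

section AffineChange

variable {E : Type*} [NormedAddCommGroup E] [NormedSpace ℝ E] [FiniteDimensional ℝ E]
  [MeasurableSpace E] [BorelSpace E] (ν : Measure E) [ν.IsAddHaarMeasure]

lemma integral_comp_affine (u : E → ℝ) {l : ℝ} (hl : 0 < l) (b : E) :
    ∫ x, l ^ Module.finrank ℝ E * u (l • x + b) ∂ν = ∫ x, u x ∂ν := by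
  rw [integral_const_mul, Measure.integral_comp_smul ν (fun x => u (x + b)),
    integral_add_right_eq_self u b, abs_of_pos (by positivity), smul_eq_mul,
    mul_inv_cancel_left₀ (by positivity)]

lemma integrable_comp_affine {u : E → ℝ} (hu : Integrable u ν) {l : ℝ} (hl : 0 < l) (b : E) :
    Integrable (fun x => l ^ Module.finrank ℝ E * u (l • x + b)) ν :=
  ((integrable_comp_smul_iff ν (fun x => u (x + b)) hl.ne').mpr (hu.comp_add_right b)).const_mul _

end AffineChange

lemma integral_comp_affine_plane (u : E2 → ℝ) {l : ℝ} (hl : 0 < l) (b : E2) :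
    ∫ x, l ^ 2 * u (l • x + b) = ∫ x, u x := by
  simpa using integral_comp_affine volume u hl b

lemma integrable_comp_affine_plane {u : E2 → ℝ} (hu : Integrable u) {l : ℝ} (hl : 0 < l) (b : E2) :
    Integrable fun x => l ^ 2 * u (l • x + b) := by
  simpa using integrable_comp_affine volume hu hl b

instance : (volume : Measure (E2 × E2)).IsAddHaarMeasure :=
  inferInstanceAs ((volume : Measure E2).prod volume).IsAddHaarMeasure

lemma integral_comp_affine_prod (u : E2 × E2 → ℝ) {l : ℝ} (hl : 0 < l) (b : E2) :
    ∫ p : E2 × E2, l ^ 4 * u (l • p.1 + b, l • p.2 + b) = ∫ p, u p := by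
  have hd : Module.finrank ℝ (E2 × E2) = 4 := by simp
  rw [← hd]
  exact integral_comp_affine volume u hl (b, b)

lemma integrable_comp_affine_prod {u : E2 × E2 → ℝ} (hu : Integrable u) {l : ℝ} (hl : 0 < l)
    (b : E2) : Integrable fun p : E2 × E2 => l ^ 4 * u (l • p.1 + b, l • p.2 + b) := by
  have hd : Module.finrank ℝ (E2 × E2) = 4 := by simp
  rw [← hd]
  exact integrable_comp_affine volume hu hl (b, b)

/-- The change of the conformal potential under the similarity `x ↦ l⁻¹ • (x - b)`. -/
def potentialShift (l : ℝ) (b x : E2) : ℝ :=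
  log (1 + ‖l⁻¹ • (x - b)‖ ^ 2) - log (1 + ‖x‖ ^ 2)

lemma one_add_norm_similarity_le (l : ℝ) (b x : E2) :
    1 + ‖l⁻¹ • (x - b)‖ ^ 2 ≤ (1 + 2 * (l⁻¹) ^ 2 * (1 + ‖b‖ ^ 2)) * (1 + ‖x‖ ^ 2) := by
  have h1 : ‖x - b‖ ^ 2 ≤ 2 * ‖x‖ ^ 2 + 2 * ‖b‖ ^ 2 := by
    have := norm_sub_le x b
    nlinarith [sq_nonneg (‖x‖ - ‖b‖), norm_nonneg (x - b)]
  rw [norm_smul, mul_pow, norm_eq_abs, sq_abs]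
  have h2 := mul_le_mul_of_nonneg_left h1 (sq_nonneg l⁻¹)
  have h3 : 0 ≤ (l⁻¹) ^ 2 * (‖b‖ ^ 2 * ‖x‖ ^ 2) := by positivity
  nlinarith [sq_nonneg l⁻¹, sq_nonneg ‖x‖]

namespace IsFiniteEnergyDensity

variable {f : E2 → ℝ}

lemma integrable_similarity_moment (hf : IsFiniteEnergyDensity f) (l : ℝ) (b : E2) :
    Integrable fun x => f x * log (1 + ‖l⁻¹ • (x - b)‖ ^ 2) := by
  set K := 1 + 2 * (l⁻¹) ^ 2 * (1 + ‖b‖ ^ 2) with hK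
  have hKpos : 0 < K := by positivity
  refine Integrable.mono' (hf.moment.add (hf.integrable.mul_const (log K)))
    (hf.measurable.mul (by fun_prop)).aestronglyMeasurable (.of_forall fun x => ?_)
  have h0 : 0 ≤ log (1 + ‖l⁻¹ • (x - b)‖ ^ 2) :=
    log_nonneg (by nlinarith [sq_nonneg ‖l⁻¹ • (x - b)‖])
  have h1 : log (1 + ‖l⁻¹ • (x - b)‖ ^ 2) ≤ log K + log (1 + ‖x‖ ^ 2) := by
    rw [← log_mul hKpos.ne' (one_add_norm_sq_pos x).ne']
    exact log_le_log (one_add_norm_sq_pos _) (one_add_norm_similarity_le l b x)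
  have h2 := hf.nonneg x
  rw [norm_eq_abs, abs_of_nonneg (mul_nonneg h2 h0)]
  simp only [Pi.add_apply]
  nlinarith

lemma integrable_potentialShift (hf : IsFiniteEnergyDensity f) (l : ℝ) (b : E2) :
    Integrable fun x => f x * potentialShift l b x := by
  simp only [potentialShift, mul_sub]
  exact (hf.integrable_similarity_moment l b).sub hf.moment

lemma mul_mul_log_mul (hf : IsFiniteEnergyDensity f) {l : ℝ} (hl : 0 < l) (y : E2) :
    l ^ 2 * f y * log (l ^ 2 * f y) = l ^ 2 * (f y * log (f y) + f y * (2 * log l)) := by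
  rcases (hf.nonneg y).eq_or_lt with h | h
  · simp [← h]
  · rw [log_mul (by positivity) h.ne', log_pow]
    push_cast
    ring

/-- The energy density of a rescaled function, pulled back to the original variables. -/
lemma similarity_energy_ae (f : E2 → ℝ) {l : ℝ} (hl : 0 < l) (b : E2) :
    (fun p : E2 × E2 => l ^ 4 * (fun q : E2 × E2 => f q.1 * f q.2 * log (chord q.1 q.2)
        - f q.1 * potentialShift l b q.1 * f q.2 - f q.1 * (f q.2 * potentialShift l b q.2)
        - f q.1 * f q.2 * (2 * log l)) (l • p.1 + b, l • p.2 + b))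
      =ᵐ[volume] fun p : E2 × E2 => l ^ 2 * f (l • p.1 + b) * (l ^ 2 * f (l • p.2 + b)) *
        log (chord p.1 p.2) := by
  filter_upwards [ae_fst_ne_snd] with p hp
  have hA (x : E2) : l⁻¹ • (l • x + b - b) = x := by
    rw [add_sub_cancel_right, inv_smul_smul₀ hl.ne']
  have hne : l • p.1 + b ≠ l • p.2 + b := fun h => hp (by
    have := congrArg (fun z => l⁻¹ • (z - b)) h
    simpa only [hA] using this)
  have hd : ‖l • p.1 + b - (l • p.2 + b)‖ = l * ‖p.1 - p.2‖ := by
    rw [add_sub_add_right_eq_sub, ← smul_sub, norm_smul, norm_eq_abs, abs_of_pos hl]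
  have hpd : 0 < ‖p.1 - p.2‖ := norm_pos_iff.mpr (sub_ne_zero.mpr hp)
  simp only [potentialShift, hA]
  rw [log_chord hp, log_chord hne, hd, log_mul hl.ne' hpd.ne']
  ring

/-- Effect of a similarity on the finiteness conditions, the entropy and the energy. -/
lemma similarity (hf : IsFiniteEnergyDensity f) {l : ℝ} (hl : 0 < l) (b : E2) :
    IsFiniteEnergyDensity (fun x => l ^ 2 * f (l • x + b)) ∧
    relEntropy (fun x => l ^ 2 * f (l • x + b))
      = relEntropy f + 2 * log l + 2 * ∫ x, f x * potentialShift l b x ∧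
    chordEnergy (fun x => l ^ 2 * f (l • x + b))
      = chordEnergy f - 2 * log l - 2 * ∫ x, f x * potentialShift l b x := by
  have hA (x : E2) : l⁻¹ • (l • x + b - b) = x := by
    rw [add_sub_cancel_right, inv_smul_smul₀ hl.ne']
  have hmom := hf.integrable_similarity_moment l b
  have hsh := hf.integrable_potentialShift l b
  have hent : Integrable fun x => f x * log (f x) + f x * (2 * log l) :=
    hf.entropy.add (hf.integrable.mul_const _)
  have u1 : Integrable fun q : E2 × E2 => f q.1 * potentialShift l b q.1 * f q.2 :=
    hsh.mul_prod hf.integrable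
  have u2 : Integrable fun q : E2 × E2 => f q.1 * (f q.2 * potentialShift l b q.2) :=
    hf.integrable.mul_prod hsh
  have u3 := hf.integrable_prod.mul_const (2 * log l)
  have u01 : Integrable fun q : E2 × E2 => f q.1 * f q.2 * log (chord q.1 q.2)
      - f q.1 * potentialShift l b q.1 * f q.2 := hf.energy.sub u1
  have u02 : Integrable fun q : E2 × E2 => f q.1 * f q.2 * log (chord q.1 q.2)
      - f q.1 * potentialShift l b q.1 * f q.2 - f q.1 * (f q.2 * potentialShift l b q.2) :=
    u01.sub u2
  have u03 : Integrable fun q : E2 × E2 => f q.1 * f q.2 * log (chord q.1 q.2)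
      - f q.1 * potentialShift l b q.1 * f q.2 - f q.1 * (f q.2 * potentialShift l b q.2)
      - f q.1 * f q.2 * (2 * log l) := u02.sub u3
  refine ⟨⟨?_, ?_, ?_, ?_, ?_, ?_, ?_⟩, ?_, ?_⟩
  · exact (hf.measurable.comp (by fun_prop)).const_mul _
  · exact fun x => mul_nonneg (by positivity) (hf.nonneg _)
  · exact integrable_comp_affine_plane hf.integrable hl b
  · rw [integral_comp_affine_plane f hl b, hf.mass]
  · simp only [hf.mul_mul_log_mul hl]
    exact integrable_comp_affine_plane hent hl b
  · simpa only [hA, mul_assoc] using integrable_comp_affine_plane hmom hl b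
  · exact (integrable_comp_affine_prod u03 hl b).congr (similarity_energy_ae f hl b)
  · have e1 := integral_comp_affine_plane (fun x => f x * log (f x) + f x * (2 * log l)) hl b
    have e2 := integral_comp_affine_plane (fun x => f x * log (1 + ‖l⁻¹ • (x - b)‖ ^ 2)) hl b
    rw [integral_add hf.entropy (hf.integrable.mul_const _), integral_mul_const, hf.mass] at e1
    simp only [hA, ← mul_assoc] at e2
    simp only [relEntropy, hf.mul_mul_log_mul hl, e1, e2, potentialShift, mul_sub]
    rw [integral_sub hmom hf.moment]
    ring
  · rw [chordEnergy, ← integral_congr_ae (similarity_energy_ae f hl b),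
      integral_comp_affine_prod (fun q : E2 × E2 => f q.1 * f q.2 * log (chord q.1 q.2)
        - f q.1 * potentialShift l b q.1 * f q.2 - f q.1 * (f q.2 * potentialShift l b q.2)
        - f q.1 * f q.2 * (2 * log l)) hl b, integral_sub u02 u3, integral_sub u01 u2,
      integral_sub hf.energy u1, integral_mul_const, hf.integral_prod_eq_one,
      Measure.volume_eq_prod, integral_prod_mul (fun x => f x * potentialShift l b x) f,
      integral_prod_mul f (fun x => f x * potentialShift l b x), hf.mass, chordEnergy,
      Measure.volume_eq_prod]
    ring

end IsFiniteEnergyDensity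

lemma mul_log_add_mul_log_le {s : ℝ} (hs : |s| ≤ 1 / 2) :
    (1 + s) * log (1 + s) + (1 - s) * log (1 - s) ≤ s ^ 2 + 4 * |s| ^ 3 := by
  have bound {t : ℝ} (ht : |t| ≤ 1 / 2) : log (1 - t) ≤ -t - t ^ 2 / 2 + 2 * |t| ^ 3 := by
    have h := (abs_le.mp (abs_log_sub_add_sum_range_le (x := t) (by linarith) 2)).2
    simp only [Finset.sum_range_succ, Finset.sum_range_zero] at h
    norm_num at h
    have h2 : |t| ^ 3 / (1 - |t|) ≤ 2 * |t| ^ 3 := by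
      rw [div_le_iff₀ (by linarith)]
      nlinarith [pow_nonneg (abs_nonneg t) 3]
    linarith
  have h1 := bound (t := s) hs
  have h2 := bound (t := -s) (by rwa [abs_neg])
  rw [abs_neg, sub_neg_eq_add] at h2
  obtain ⟨hl, hr⟩ := abs_le.mp hs
  have h3 := mul_le_mul_of_nonneg_left h1 (by linarith : 0 ≤ 1 - s)
  have h4 := mul_le_mul_of_nonneg_left h2 (by linarith : 0 ≤ 1 + s)
  linarith

namespace IsFiniteEnergyDensity

variable {f w : E2 → ℝ}

lemma mul_log_tilt (hf : IsFiniteEnergyDensity f) (hw : ∀ x, |w x| ≤ 1 / 2) (x : E2) :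
    f x * (1 + w x) * log (f x * (1 + w x))
      = f x * log (f x) * (1 + w x) + f x * ((1 + w x) * log (1 + w x)) := by
  have h1 : 0 < 1 + w x := by linarith [(abs_le.mp (hw x)).1]
  rcases (hf.nonneg x).eq_or_lt with h | h
  · simp [← h]
  · rw [log_mul h.ne' h1.ne']
    ring

lemma norm_one_add_le (hw : ∀ x, |w x| ≤ 1 / 2) (x : E2) : ‖1 + w x‖ ≤ 2 := by
  obtain ⟨h1, h2⟩ := abs_le.mp (hw x)
  rw [norm_eq_abs, abs_le]
  constructor <;> linarith

lemma integrable_tilt_log (hf : IsFiniteEnergyDensity f) (hwm : Measurable w)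
    (hw : ∀ x, |w x| ≤ 1 / 2) :
    Integrable fun x => f x * ((1 + w x) * log (1 + w x)) := by
  refine hf.integrable.mul_bdd (c := 2) (by fun_prop) (.of_forall fun x => ?_)
  obtain ⟨h1, h2⟩ := abs_le.mp (hw x)
  have h3 := one_sub_inv_le_log_of_pos (by linarith : 0 < 1 + w x)
  have h4 := log_le_sub_one_of_pos (by linarith : 0 < 1 + w x)
  have h5 := mul_le_mul_of_nonneg_left h3 (by linarith : 0 ≤ 1 + w x)
  have h6 := mul_le_mul_of_nonneg_left h4 (by linarith : 0 ≤ 1 + w x)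
  rw [mul_sub, mul_inv_cancel₀ (by linarith)] at h5
  rw [norm_eq_abs, abs_le]
  constructor <;> nlinarith

/-- Multiplying by a bounded factor of mean one preserves the finiteness conditions. -/
lemma tilt (hf : IsFiniteEnergyDensity f) (hwm : Measurable w) (hw : ∀ x, |w x| ≤ 1 / 2)
    (hw0 : ∫ x, f x * w x = 0) : IsFiniteEnergyDensity fun x => f x * (1 + w x) := by
  have hb := norm_one_add_le hw
  have hfw : Integrable fun x => f x * w x := hf.integrable.mul_bdd (by fun_prop) (.of_forall hw)
  refine ⟨hf.measurable.mul (by fun_prop), fun x => mul_nonneg (hf.nonneg x) ?_, ?_, ?_, ?_, ?_, ?_⟩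
  · linarith [(abs_le.mp (hw x)).1]
  · exact hf.integrable.mul_bdd (by fun_prop) (.of_forall hb)
  · simp only [mul_add, mul_one]
    rw [integral_add hf.integrable hfw, hw0, hf.mass, add_zero]
  · simp only [hf.mul_log_tilt hw]
    exact (hf.entropy.mul_bdd (by fun_prop) (.of_forall hb)).add (hf.integrable_tilt_log hwm hw)
  · simp only [mul_right_comm _ (1 + w _)]
    exact hf.moment.mul_bdd (by fun_prop) (.of_forall hb)
  · refine (hf.energy.mul_bdd (c := 4) (g := fun p => (1 + w p.1) * (1 + w p.2)) (by fun_prop)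
      (.of_forall fun p => ?_)).congr (.of_forall fun p => ?_)
    · rw [norm_mul]
      nlinarith [hb p.1, hb p.2, norm_nonneg (1 + w p.1), norm_nonneg (1 + w p.2)]
    · simp only
      ring

lemma relEntropy_tilt_add (hf : IsFiniteEnergyDensity f) (hwm : Measurable w)
    (hw : ∀ x, |w x| ≤ 1 / 2) :
    relEntropy (fun x => f x * (1 + w x)) + relEntropy (fun x => f x * (1 + -w x))
      = 2 * relEntropy f
        + ∫ x, f x * ((1 + w x) * log (1 + w x) + (1 - w x) * log (1 - w x)) := by
  have hw' : ∀ x, |(-w) x| ≤ 1 / 2 := fun x => by simpa using hw x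
  have e1 := hf.integrable_tilt_log hwm hw
  have e2 : Integrable fun x => f x * ((1 + -w x) * log (1 + -w x)) :=
    hf.integrable_tilt_log hwm.neg hw'
  have a1 := hf.entropy.mul_bdd (g := fun x => 1 + w x) (by fun_prop)
    (.of_forall (norm_one_add_le hw))
  have a2 := hf.entropy.mul_bdd (g := fun x => 1 + -w x) (by fun_prop)
    (.of_forall (norm_one_add_le hw'))
  have b1 := hf.moment.mul_bdd (g := fun x => 1 + w x) (by fun_prop)
    (.of_forall (norm_one_add_le hw))
  have b2 := hf.moment.mul_bdd (g := fun x => 1 + -w x) (by fun_prop)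
    (.of_forall (norm_one_add_le hw'))
  have c1 : ∫ x, f x * (1 + w x) * log (f x * (1 + w x))
      = (∫ x, f x * log (f x) * (1 + w x)) + ∫ x, f x * ((1 + w x) * log (1 + w x)) := by
    simp only [hf.mul_log_tilt hw]
    exact integral_add a1 e1
  have c2 : ∫ x, f x * (1 + -w x) * log (f x * (1 + -w x))
      = (∫ x, f x * log (f x) * (1 + -w x)) + ∫ x, f x * ((1 + -w x) * log (1 + -w x)) := by
    have := hf.mul_log_tilt hw'
    simp only [Pi.neg_apply] at this
    simp only [this]
    exact integral_add a2 e2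
  have d1 : (∫ x, f x * log (f x) * (1 + w x)) + (∫ x, f x * log (f x) * (1 + -w x))
      = 2 * ∫ x, f x * log (f x) := by
    rw [← integral_add a1 a2, ← integral_const_mul]
    exact integral_congr_ae (.of_forall fun x => by simp only; ring)
  have d2 : (∫ x, f x * log (1 + ‖x‖ ^ 2) * (1 + w x))
      + (∫ x, f x * log (1 + ‖x‖ ^ 2) * (1 + -w x)) = 2 * ∫ x, f x * log (1 + ‖x‖ ^ 2) := by
    rw [← integral_add b1 b2, ← integral_const_mul]
    exact integral_congr_ae (.of_forall fun x => by simp only; ring)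
  have d3 : (∫ x, f x * ((1 + w x) * log (1 + w x))) + (∫ x, f x * ((1 + -w x) * log (1 + -w x)))
      = ∫ x, f x * ((1 + w x) * log (1 + w x) + (1 - w x) * log (1 - w x)) := by
    rw [← integral_add e1 e2]
    exact integral_congr_ae (.of_forall fun x => by
      simp only [← sub_eq_add_neg]; ring)
  simp only [relEntropy, mul_right_comm (f _) (1 + _) (log (1 + ‖_‖ ^ 2))]
  linarith

lemma chordEnergy_tilt_add (hf : IsFiniteEnergyDensity f) (hwm : Measurable w)
    (hw : ∀ x, |w x| ≤ 1 / 2) (hw0 : ∫ x, f x * w x = 0) :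
    chordEnergy (fun x => f x * (1 + w x)) + chordEnergy (fun x => f x * (1 + -w x))
      = 2 * chordEnergy f
        + 2 * ∫ p : E2 × E2, f p.1 * f p.2 * log (chord p.1 p.2) * (w p.1 * w p.2) := by
  have h1 := (hf.tilt hwm hw hw0).energy
  have h2 := (hf.tilt hwm.neg (fun x => by simpa using hw x)
    (by simp [integral_neg, hw0])).energy
  have h3 := hf.energy.mul_bdd (c := 1) (g := fun p => w p.1 * w p.2) (by fun_prop)
      (.of_forall fun p => by
        rw [norm_mul]
        have a := hw p.1
        have b := hw p.2
        simp only [norm_eq_abs]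
        nlinarith [abs_nonneg (w p.1), abs_nonneg (w p.2)])
  simp only [chordEnergy, Pi.neg_apply] at *
  rw [← integral_add h1 h2, ← mul_add, ← integral_add hf.energy h3, ← integral_const_mul]
  exact integral_congr_ae (.of_forall fun p => by simp only; ring)

end IsFiniteEnergyDensity

/-- Every infinitesimal conformal motion of the sphere in a coordinate direction is induced, up to
second order, by a similarity of the plane. -/
lemma exists_potentialShift_le (i : Fin 3) {t : ℝ} (ht : t ≤ 1 / 2) :
    ∃ l : ℝ, 0 < l ∧ ∃ b : E2, ∀ x,
      log l + potentialShift l b x ≤ 2 * t ^ 2 - t * stereo x i := by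
  have htrans (j : Fin 2) (x : E2) : log 1 + potentialShift 1 (EuclideanSpace.single j t) x
      ≤ 2 * t ^ 2 - t * (2 * x j / (1 + ‖x‖ ^ 2)) := by
    have h1 := one_add_norm_sq_pos x
    have h2 := one_add_norm_sq_pos (x - EuclideanSpace.single j t)
    have h3 := log_le_sub_one_of_pos (div_pos h2 h1)
    have h4 : ‖x - EuclideanSpace.single j t‖ ^ 2 = ‖x‖ ^ 2 - 2 * t * x j + t ^ 2 := by
      rw [norm_sub_sq_real, EuclideanSpace.inner_single_right]
      simp [mul_assoc]
    rw [log_div h2.ne' h1.ne'] at h3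
    rw [potentialShift, inv_one, one_smul, log_one, zero_add]
    refine h3.trans ?_
    rw [h4, div_sub_one h1.ne', mul_div_assoc', ← sub_nonneg]
    have : 0 ≤ t ^ 2 * (1 + 2 * ‖x‖ ^ 2) / (1 + ‖x‖ ^ 2) := by positivity
    refine this.trans_eq ?_
    field_simp
    ring
  fin_cases i
  · exact ⟨1, one_pos, _, htrans 0⟩
  · exact ⟨1, one_pos, _, htrans 1⟩
  · have ht1 : 0 < 1 - t := by linarith
    refine ⟨(1 - t)⁻¹, inv_pos.mpr ht1, 0, fun x => ?_⟩
    have h1 := one_add_norm_sq_pos x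
    have h2 : 0 < 1 + (1 - t) ^ 2 * ‖x‖ ^ 2 := by positivity
    have h3 := log_le_sub_one_of_pos (div_pos h2 (mul_pos ht1 h1))
    rw [log_div h2.ne' (mul_pos ht1 h1).ne', log_mul ht1.ne' h1.ne'] at h3
    rw [potentialShift, inv_inv, sub_zero, norm_smul, mul_pow, norm_eq_abs, sq_abs, log_inv]
    have h4 : (1 + (1 - t) ^ 2 * ‖x‖ ^ 2) / ((1 - t) * (1 + ‖x‖ ^ 2)) - 1
        ≤ 2 * t ^ 2 - t * ((‖x‖ ^ 2 - 1) / (1 + ‖x‖ ^ 2)) := by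
      rw [← sub_nonneg]
      have : 0 ≤ t ^ 2 * (1 - 2 * t + 2 * (1 - t) * ‖x‖ ^ 2) / ((1 - t) * (1 + ‖x‖ ^ 2)) := by
        have : 0 ≤ 1 - 2 * t := by linarith
        positivity
      convert this using 1
      field_simp
      ring
    simp only [stereo, Fin.reduceFinMk, Matrix.cons_val]
    linarith

/-- The free energy interpolating between the relative entropy and the logarithmic
Hardy–Littlewood–Sobolev functional. -/
def freeEnergy (β : ℝ) (f : E2 → ℝ) : ℝ := relEntropy f + β * (chordEnergy f + 1)

namespace IsFiniteEnergyDensity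

variable {f : E2 → ℝ} {β ε : ℝ}

lemma mul_barycenter_le (hf : IsFiniteEnergyDensity f) (hβ : β < 1)
    (hmin : ∀ g, IsFiniteEnergyDensity g → freeEnergy β f ≤ freeEnergy β g + ε) (i : Fin 3)
    {t : ℝ} (ht : t ≤ 1 / 2) :
    t * barycenter f i ≤ 2 * t ^ 2 + ε / (2 * (1 - β)) := by
  obtain ⟨l, hl, b, hlb⟩ := exists_potentialShift_le i ht
  obtain ⟨hg, hH, hL⟩ := hf.similarity hl b
  have h1 := hmin _ hg
  rw [freeEnergy, freeEnergy, hH, hL] at h1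
  have i1 : Integrable fun x => f x * log l + f x * potentialShift l b x :=
    (hf.integrable.mul_const _).add (hf.integrable_potentialShift l b)
  have i2 : Integrable fun x => f x * (2 * t ^ 2) - t * (f x * stereo x i) :=
    (hf.integrable.mul_const _).sub ((hf.integrable_mul_stereo i).const_mul t)
  have h2 : ∫ x, (f x * log l + f x * potentialShift l b x)
      ≤ ∫ x, (f x * (2 * t ^ 2) - t * (f x * stereo x i)) :=
    integral_mono i1 i2 fun x => by
      have := mul_le_mul_of_nonneg_left (hlb x) (hf.nonneg x)
      simp only
      linarith
  rw [integral_add (hf.integrable.mul_const _) (hf.integrable_potentialShift l b),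
    integral_sub (hf.integrable.mul_const _) ((hf.integrable_mul_stereo i).const_mul t),
    integral_mul_const, integral_mul_const, integral_const_mul, hf.mass, ← barycenter] at h2
  have h3 : -(ε / (2 * (1 - β))) ≤ log l + ∫ x, f x * potentialShift l b x := by
    rw [neg_le_iff_add_nonneg', ← sub_nonneg]
    have : 0 ≤ (ε + 2 * (1 - β) * (log l + ∫ x, f x * potentialShift l b x)) / (2 * (1 - β)) :=
      div_nonneg (by linarith) (by linarith)
    convert this using 1
    field_simp [(by linarith : (1 - β) ≠ 0)]
    ring
  linarith

lemma abs_barycenter_le (hf : IsFiniteEnergyDensity f) (hβ : β < 1) {u : ℝ} (hu : 0 < u)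
    (hu' : u ≤ 1 / 4)
    (hmin : ∀ g, IsFiniteEnergyDensity g → freeEnergy β f ≤ freeEnergy β g + u ^ 3) (i : Fin 3) :
    |barycenter f i| ≤ (2 + (1 - β)⁻¹) * u := by
  have h1 := hf.mul_barycenter_le hβ hmin i (t := u) (by linarith)
  have h2 := hf.mul_barycenter_le hβ hmin i (t := -u) (by linarith)
  have hβ' : 0 < (1 - β)⁻¹ := inv_pos.mpr (by linarith)
  have h3 : u ^ 3 / (2 * (1 - β)) ≤ u * ((1 - β)⁻¹ * u) := by
    rw [div_eq_mul_inv, mul_inv]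
    have : u ^ 3 * (2⁻¹ * (1 - β)⁻¹) = u * ((1 - β)⁻¹ * u) * (u / 2) := by ring
    rw [this]
    exact mul_le_of_le_one_right (by positivity) (by linarith)
  refine abs_le.mpr ⟨?_, ?_⟩
  · refine le_of_mul_le_mul_left ?_ hu
    linarith
  · refine le_of_mul_le_mul_left ?_ hu
    linarith

lemma second_variation_coord (hf : IsFiniteEnergyDensity f) (hβ0 : 0 ≤ β) {u : ℝ} (hu : 0 < u)
    (hu' : u ≤ 1 / 4)
    (hmin : ∀ g, IsFiniteEnergyDensity g → freeEnergy β f ≤ freeEnergy β g + u ^ 3) (i : Fin 3) :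
    -(34 * u) ≤ (∫ x, f x * stereo x i ^ 2) + 2 * β *
      ((∫ p : E2 × E2, f p.1 * f p.2 * log (chord p.1 p.2) * (stereo p.1 i * stereo p.2 i))
        - 3 * |barycenter f i| * chordEnergy f) := by
  set a := barycenter f i with ha
  have hs (x : E2) := abs_le.mp (abs_stereo_le_one x i)
  have hsq : Integrable fun x => f x * stereo x i ^ 2 :=
    hf.integrable.mul_bdd (c := 1) (by fun_prop) (.of_forall fun x => by
      rw [norm_eq_abs, abs_pow]
      exact pow_le_one₀ (abs_nonneg _) (abs_stereo_le_one x i))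
  have ha1 : |a| ≤ 1 := by
    rw [ha, barycenter, ← norm_eq_abs, ← hf.mass]
    refine norm_integral_le_of_norm_le hf.integrable (.of_forall fun x => ?_)
    rw [norm_mul, norm_eq_abs, norm_eq_abs, abs_of_nonneg (hf.nonneg x)]
    exact mul_le_of_le_one_right (hf.nonneg x) (abs_stereo_le_one x i)
  have haa := abs_le.mp ha1
  set w : E2 → ℝ := fun x => u * (stereo x i - a) with hw
  have hwm : Measurable w := by fun_prop
  have hwb2 (x : E2) : |w x| ≤ 2 * u := by
    rw [hw, abs_mul, abs_of_pos hu, mul_comm 2 u]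
    refine mul_le_mul_of_nonneg_left (abs_le.mpr ⟨?_, ?_⟩) hu.le <;> linarith [hs x]
  have hwb (x : E2) : |w x| ≤ 1 / 2 := by linarith [hwb2 x]
  have hw0 : ∫ x, f x * w x = 0 := by
    have : (fun x => f x * w x) = fun x => u * (f x * stereo x i) - u * a * f x := by
      ext x; simp only [hw]; ring
    rw [this, integral_sub ((hf.integrable_mul_stereo i).const_mul u) (hf.integrable.const_mul _),
      integral_const_mul, integral_const_mul, hf.mass, ← barycenter, ← ha]
    ring
  have g1 := hmin _ (hf.tilt hwm hwb hw0)
  have g2 := hmin _ (hf.tilt hwm.neg (fun x => by simpa using hwb x) (by simp [integral_neg, hw0]))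
  have hH := hf.relEntropy_tilt_add hwm hwb
  have hL := hf.chordEnergy_tilt_add hwm hwb hw0
  simp only [freeEnergy, Pi.neg_apply] at g1 g2
  have hφ : ∫ x, f x * ((1 + w x) * log (1 + w x) + (1 - w x) * log (1 - w x))
      ≤ u ^ 2 * (∫ x, f x * stereo x i ^ 2) + 32 * u ^ 3 := by
    have j1 := hsq.const_mul (u ^ 2)
    have j2 := (hf.integrable_mul_stereo i).const_mul (2 * u ^ 2 * a)
    have j3 := hf.integrable.mul_const (u ^ 2 * a ^ 2 + 32 * u ^ 3)
    have j12 : Integrable fun x => u ^ 2 * (f x * stereo x i ^ 2)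
        - 2 * u ^ 2 * a * (f x * stereo x i) := j1.sub j2
    have j123 : Integrable fun x => u ^ 2 * (f x * stereo x i ^ 2)
        - 2 * u ^ 2 * a * (f x * stereo x i) + f x * (u ^ 2 * a ^ 2 + 32 * u ^ 3) := j12.add j3
    have k1 := (hf.integrable_tilt_log hwm hwb).add
      (hf.integrable_tilt_log hwm.neg (fun x => by simpa using hwb x))
    have := integral_mono (k1.congr (.of_forall fun x => by
      simp only [Pi.add_apply, Pi.neg_apply, ← sub_eq_add_neg, ← mul_add] :
      _ =ᵐ[volume] fun x => f x * ((1 + w x) * log (1 + w x)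
        + (1 - w x) * log (1 - w x)))) j123 fun x => by
      have e1 := mul_log_add_mul_log_le (hwb x)
      have e2 : |w x| ^ 3 ≤ (2 * u) ^ 3 := pow_le_pow_left₀ (abs_nonneg _) (hwb2 x) 3
      have e3 : w x ^ 2 = u ^ 2 * (stereo x i ^ 2 - 2 * a * stereo x i + a ^ 2) := by
        simp only [hw]; ring
      have := mul_le_mul_of_nonneg_left (e1.trans (by linarith : _ ≤
        u ^ 2 * (stereo x i ^ 2 - 2 * a * stereo x i + a ^ 2) + 32 * u ^ 3)) (hf.nonneg x)
      simp only
      linarith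
    rw [integral_add j12 j3, integral_sub j1 j2, integral_const_mul, integral_const_mul,
      integral_mul_const, hf.mass, ← barycenter, ← ha] at this
    nlinarith [mul_nonneg (sq_nonneg u) (sq_nonneg a)]
  have hst : Integrable fun p : E2 × E2 =>
      f p.1 * f p.2 * log (chord p.1 p.2) * (stereo p.1 i * stereo p.2 i) :=
    hf.energy.mul_bdd (c := 1) (by fun_prop) (.of_forall fun p => by
      rw [norm_mul]
      exact mul_le_one₀ (abs_stereo_le_one _ i) (norm_nonneg _) (abs_stereo_le_one _ i))
  have hww : ∫ p : E2 × E2, f p.1 * f p.2 * log (chord p.1 p.2) * (w p.1 * w p.2)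
      ≤ u ^ 2 * ((∫ p : E2 × E2,
          f p.1 * f p.2 * log (chord p.1 p.2) * (stereo p.1 i * stereo p.2 i))
        - 3 * |a| * chordEnergy f) := by
    rw [chordEnergy, ← integral_const_mul, ← integral_sub hst (hf.energy.const_mul _),
      ← integral_const_mul]
    refine integral_mono (hf.energy.mul_bdd (c := 1) (by fun_prop) (.of_forall fun p => ?_))
      ((hst.sub (hf.energy.const_mul _)).const_mul _) fun p => ?_
    · rw [norm_mul]
      exact mul_le_one₀ ((hwb _).trans (by norm_num)) (norm_nonneg _) ((hwb _).trans (by norm_num))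
    · have h1 : f p.1 * f p.2 * log (chord p.1 p.2) ≤ 0 :=
        mul_nonpos_of_nonneg_of_nonpos (mul_nonneg (hf.nonneg _) (hf.nonneg _))
          (log_chord_nonpos _ _)
      have h2 : stereo p.1 i * stereo p.2 i - 3 * |a|
          ≤ (stereo p.1 i - a) * (stereo p.2 i - a) := by
        have h3 : a * stereo p.1 i ≤ |a| := (le_abs_self _).trans (by
          rw [abs_mul]; exact mul_le_of_le_one_right (abs_nonneg a) (abs_stereo_le_one _ i))
        have h4 : a * stereo p.2 i ≤ |a| := (le_abs_self _).trans (by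
          rw [abs_mul]; exact mul_le_of_le_one_right (abs_nonneg a) (abs_stereo_le_one _ i))
        nlinarith [sq_nonneg a, abs_nonneg a]
      have h5 := mul_le_mul_of_nonneg_left (mul_le_mul_of_nonpos_left h2 h1) (sq_nonneg u)
      simp only [hw]
      linarith
  have hu2 : 0 < u ^ 2 := by positivity
  refine le_of_mul_le_mul_left ?_ hu2
  have := mul_le_mul_of_nonneg_left hww (by linarith : 0 ≤ 2 * β)
  nlinarith

end IsFiniteEnergyDensity

namespace IsFiniteEnergyDensity

variable {f : E2 → ℝ} {β : ℝ}

lemma second_variation (hf : IsFiniteEnergyDensity f) (hβ0 : 0 ≤ β) {u : ℝ} (hu : 0 < u)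
    (hu' : u ≤ 1 / 4)
    (hmin : ∀ g, IsFiniteEnergyDensity g → freeEnergy β f ≤ freeEnergy β g + u ^ 3) :
    -(102 * u) ≤ 1 + 2 * β * (chordEnergy f + 1 / 2 + ∑ i, barycenter f i ^ 2
      - 3 * (∑ i, |barycenter f i|) * chordEnergy f) := by
  have hsq (i : Fin 3) : Integrable fun x => f x * stereo x i ^ 2 :=
    hf.integrable.mul_bdd (c := 1) (by fun_prop) (.of_forall fun x => by
      rw [norm_eq_abs, abs_pow]
      exact pow_le_one₀ (abs_nonneg _) (abs_stereo_le_one x i))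
  have hst (i : Fin 3) : Integrable fun p : E2 × E2 =>
      f p.1 * f p.2 * log (chord p.1 p.2) * (stereo p.1 i * stereo p.2 i) :=
    hf.energy.mul_bdd (c := 1) (by fun_prop) (.of_forall fun p => by
      rw [norm_mul]
      exact mul_le_one₀ (abs_stereo_le_one _ i) (norm_nonneg _) (abs_stereo_le_one _ i))
  have h1 : ∑ i, ∫ x, f x * stereo x i ^ 2 = 1 := by
    rw [← integral_finsetSum _ fun i _ => hsq i, ← hf.mass]
    simp only [← Finset.mul_sum, sum_stereo_sq, mul_one]
  have h2 : ∑ i, ∫ p : E2 × E2,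
      f p.1 * f p.2 * log (chord p.1 p.2) * (stereo p.1 i * stereo p.2 i)
      = chordEnergy f
        - 2 * ∫ p : E2 × E2, f p.1 * f p.2 * (chord p.1 p.2 * log (chord p.1 p.2)) := by
    rw [← integral_finsetSum _ fun i _ => hst i, chordEnergy, ← integral_const_mul,
      ← integral_sub hf.energy (hf.integrable_chord_mul_log.const_mul 2)]
    refine integral_congr_ae (.of_forall fun p => ?_)
    simp only [← Finset.mul_sum, sum_stereo_mul]
    ring
  have h3 := Finset.sum_le_sum fun i (_ : i ∈ Finset.univ) =>
    hf.second_variation_coord hβ0 hu hu' hmin i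
  rw [Finset.sum_add_distrib, h1, ← Finset.mul_sum, Finset.sum_sub_distrib, h2, ← Finset.sum_mul,
    ← Finset.mul_sum, Finset.sum_const, Finset.card_univ, Fintype.card_fin, nsmul_eq_mul] at h3
  have h4 := mul_le_mul_of_nonneg_left hf.neg_half_sub_le_integral_chord_mul_log
    (by linarith : 0 ≤ 2 * β)
  push_cast at h3
  linarith

lemma freeEnergy_ge_of_near_min (hf : IsFiniteEnergyDensity f) (hβ0 : 0 ≤ β) (hβ : β < 1)
    {u K : ℝ} (hu : 0 < u) (hu' : u ≤ 1 / 4) (hK : -chordEnergy f ≤ K)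
    (hmin : ∀ g, IsFiniteEnergyDensity g → freeEnergy β f ≤ freeEnergy β g + u ^ 3) :
    -((1 - β) / 2)
        - (51 + 3 * (2 + (1 - β)⁻¹) ^ 2 + 9 * (2 + (1 - β)⁻¹) * K) * u
      ≤ freeEnergy β f := by
  set A := 2 + (1 - β)⁻¹ with hA
  have hA0 : 0 < A := by
    have : 0 < (1 - β)⁻¹ := inv_pos.mpr (by linarith)
    positivity
  have ha := hf.abs_barycenter_le hβ hu hu' hmin
  have hv := hf.second_variation hβ0 hu hu' hmin
  have hL : 0 ≤ -chordEnergy f := by linarith [hf.chordEnergy_le]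
  have s1 : ∑ i, |barycenter f i| ≤ 3 * (A * u) := by
    calc ∑ i, |barycenter f i| ≤ ∑ _i : Fin 3, A * u := Finset.sum_le_sum fun i _ => ha i
      _ = 3 * (A * u) := by simp
  have s2 : ∑ i, barycenter f i ^ 2 ≤ 3 * (A ^ 2 * u) := by
    calc ∑ i, barycenter f i ^ 2 ≤ ∑ _i : Fin 3, A ^ 2 * u :=
          Finset.sum_le_sum fun i _ => by
            rw [← sq_abs]
            calc |barycenter f i| ^ 2 ≤ (A * u) ^ 2 := pow_le_pow_left₀ (abs_nonneg _) (ha i) 2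
              _ = A ^ 2 * u * u := by ring
              _ ≤ A ^ 2 * u := mul_le_of_le_one_right (by positivity) (by linarith)
      _ = 3 * (A ^ 2 * u) := by simp
  have s3 : (∑ i, |barycenter f i|) * -chordEnergy f ≤ 3 * (A * u) * K :=
    mul_le_mul s1 hK hL (by positivity)
  have hX : 0 ≤ 3 * (A ^ 2 * u) + 3 * (3 * (A * u) * K) := by
    have : 0 ≤ K := hL.trans hK
    positivity
  have s4 : 2 * β * (∑ i, barycenter f i ^ 2 - 3 * (∑ i, |barycenter f i|) * chordEnergy f)
      ≤ 2 * (3 * (A ^ 2 * u) + 3 * (3 * (A * u) * K)) := by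
    refine (mul_le_mul_of_nonneg_left (b := _)
      (by linarith : _ ≤ 3 * (A ^ 2 * u) + 3 * (3 * (A * u) * K))
      (by linarith : 0 ≤ 2 * β)).trans ?_
    exact mul_le_mul_of_nonneg_right (by linarith) hX
  have := hf.relEntropy_nonneg
  rw [freeEnergy]
  linarith

/-- The free energy is almost nonnegative below the critical parameter. -/
lemma neg_half_one_sub_le_freeEnergy (hf : IsFiniteEnergyDensity f) (hβ0 : 0 ≤ β) (hβ : β < 1) :
    -((1 - β) / 2) ≤ freeEnergy β f := by
  set S := {r | ∃ g, IsFiniteEnergyDensity g ∧ freeEnergy β g = r} with hS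
  have hbdd : BddBelow S := by
    refine ⟨log (1 - β) + β, ?_⟩
    rintro r ⟨g, hg, rfl⟩
    have := hg.log_one_sub_le hβ
    rw [freeEnergy]
    linarith
  have hne : S.Nonempty := ⟨_, f, hf, rfl⟩
  set c := (1 + β) / 2 with hc
  set K := (freeEnergy β f + 1 - β - log (1 - c)) * (2 * (1 - β)⁻¹) with hK
  set C := 51 + 3 * (2 + (1 - β)⁻¹) ^ 2 + 9 * (2 + (1 - β)⁻¹) * K with hC
  have hβ1 : 0 < 1 - β := by linarith
  have key {u : ℝ} (hu : 0 < u) (hu' : u ≤ 1 / 4) :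
      -((1 - β) / 2) - C * u - u ≤ freeEnergy β f := by
    have hu3 : u ^ 3 ≤ u := by nlinarith [sq_nonneg u]
    obtain ⟨r, ⟨g, hg, rfl⟩, hr⟩ := Real.lt_sInf_add_pos hne (pow_pos hu 3)
    have hmin : ∀ k, IsFiniteEnergyDensity k → freeEnergy β g ≤ freeEnergy β k + u ^ 3 :=
      fun k hk => by linarith [csInf_le hbdd ⟨k, hk, rfl⟩]
    have hgK : -chordEnergy g ≤ K := by
      have h1 := hg.log_one_sub_le (c := c) (by linarith)
      have h2 := hmin f hf
      rw [hK, ← div_le_iff₀ (by positivity)]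
      have h3 : freeEnergy β g = relEntropy g + β * (chordEnergy g + 1) := rfl
      have h4 : -chordEnergy g / (2 * (1 - β)⁻¹) = (c - β) * -chordEnergy g := by
        rw [hc]
        field_simp
        ring
      rw [h4]
      linarith
    have := hg.freeEnergy_ge_of_near_min hβ0 hβ hu hu' hgK hmin
    linarith [hmin f hf]
  refine ge_of_tendsto (x := nhdsWithin 0 (Set.Ioi 0))
    (f := fun u : ℝ => freeEnergy β f + C * u + u) (Tendsto.mono_left ?_ nhdsWithin_le_nhds) ?_
  · have : Continuous fun u : ℝ => freeEnergy β f + C * u + u := by fun_prop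
    simpa using this.tendsto 0
  · filter_upwards [Ioc_mem_nhdsGT (by norm_num : (0 : ℝ) < 1 / 4)] with u hu
    linarith [key hu.1 hu.2]

/-- The logarithmic Hardy–Littlewood–Sobolev inequality. -/
theorem log_HLS (hf : IsFiniteEnergyDensity f) : 0 ≤ relEntropy f + chordEnergy f + 1 := by
  refine ge_of_tendsto (x := nhdsWithin 1 (Set.Iio 1))
    (f := fun β : ℝ => relEntropy f + β * (chordEnergy f + 1) + (1 - β) / 2)
    (Tendsto.mono_left ?_ nhdsWithin_le_nhds) ?_
  · have : Continuous fun β : ℝ => relEntropy f + β * (chordEnergy f + 1) + (1 - β) / 2 := by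
      fun_prop
    simpa [add_assoc] using this.tendsto 1
  · filter_upwards [Ico_mem_nhdsLT (zero_lt_one (α := ℝ))] with β hβ
    have := hf.neg_half_one_sub_le_freeEnergy hβ.1 hβ.2
    rw [freeEnergy] at this
    linarith

/-- Vanishing of the interpolated functional characterises the density `μ`. -/
lemma ae_eq_mu2_of_eq_zero (hf : IsFiniteEnergyDensity f) {α : ℝ} (hα : 0 < α)
    (h : relEntropy f + (1 - α) * (chordEnergy f + 1) = 0) : f =ᵐ[volume] mu2 := by
  refine hf.ae_eq_mu2_of_relEntropy_eq_zero (le_antisymm ?_ hf.relEntropy_nonneg)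
  rcases le_total α 1 with h1 | h1
  · have := mul_nonneg (sub_nonneg.mpr h1) hf.log_HLS
    have h2 : α * relEntropy f ≤ 0 := by linarith
    exact nonpos_of_mul_nonpos_right h2 hα
  · have := mul_nonneg (sub_nonneg.mpr h1)
      (by linarith [hf.chordEnergy_le] : 0 ≤ -(chordEnergy f + 1))
    linarith

end IsFiniteEnergyDensity

section Normalization

variable {f g : E2 → ℝ} {M : ℝ}

lemma ae_prod_eq_of_ae_eq (hg : g =ᵐ[volume] fun x => M⁻¹ * f x) :
    ∀ᵐ p : E2 × E2, g p.1 = M⁻¹ * f p.1 ∧ g p.2 = M⁻¹ * f p.2 :=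
  (Measure.quasiMeasurePreserving_fst.ae hg).and (Measure.quasiMeasurePreserving_snd.ae hg)

lemma IsFiniteEnergyDensity.of_admissible (hM : 0 < M) (hf : Admissible f) (hmass : ∫ x, f x = M)
    (hgm : Measurable g) (hg0 : ∀ x, 0 ≤ g x) (hg : g =ᵐ[volume] fun x => M⁻¹ * f x) :
    IsFiniteEnergyDensity g ∧
    (Integrable fun p : E2 × E2 => g p.1 * g p.2 * log ‖p.1 - p.2‖) ∧
    (fun p : E2 × E2 => g p.1 * g p.2 * log (chord p.1 p.2)) =ᵐ[volume] fun p : E2 × E2 =>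
      2 * (g p.1 * g p.2 * log ‖p.1 - p.2‖) - g p.1 * log (1 + ‖p.1‖ ^ 2) * g p.2
        - g p.1 * (g p.2 * log (1 + ‖p.2‖ ^ 2)) := by
  obtain ⟨hfm, hf0, hfi, hent, hmom, hen⟩ := hf
  have hgi : Integrable g := (hfi.const_mul _).congr hg.symm
  have hmom' : Integrable fun x => g x * log (1 + ‖x‖ ^ 2) := by
    refine ((hmom.sub (hfi.const_mul (log π))).const_mul (M⁻¹ / 2)).congr ?_
    filter_upwards [hg] with x hx
    rw [hx, Pi.sub_apply, Vpot]
    ring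
  have hent' : Integrable fun x => f x * log (f x) :=
    hent.mono (by fun_prop) (.of_forall fun x => by simp)
  have hlog : Integrable fun p : E2 × E2 => f p.1 * f p.2 * log ‖p.1 - p.2‖ :=
    hen.mono (by fun_prop) (.of_forall fun p => by simp)
  have hlog' : Integrable fun p : E2 × E2 => g p.1 * g p.2 * log ‖p.1 - p.2‖ := by
    refine (hlog.const_mul (M⁻¹ ^ 2)).congr ?_
    filter_upwards [ae_prod_eq_of_ae_eq hg] with p hp
    rw [hp.1, hp.2]
    ring
  have hchord : (fun p : E2 × E2 => g p.1 * g p.2 * log (chord p.1 p.2)) =ᵐ[volume]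
      fun p : E2 × E2 => 2 * (g p.1 * g p.2 * log ‖p.1 - p.2‖)
        - g p.1 * log (1 + ‖p.1‖ ^ 2) * g p.2 - g p.1 * (g p.2 * log (1 + ‖p.2‖ ^ 2)) := by
    filter_upwards [ae_fst_ne_snd] with p hp
    rw [log_chord hp]
    ring
  refine ⟨⟨hgm, hg0, hgi, ?_, ?_, hmom', ?_⟩, hlog', hchord⟩
  · rw [integral_congr_ae hg, integral_const_mul, hmass, inv_mul_cancel₀ hM.ne']
  · refine ((hent'.const_mul M⁻¹).add (hfi.const_mul (M⁻¹ * log M⁻¹))).congr ?_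
    filter_upwards [hg, hf0] with x hx h0
    rw [hx, Pi.add_apply]
    rcases h0.eq_or_lt with h | h
    · simp [← h]
    · rw [log_mul (inv_pos.mpr hM).ne' h.ne']
      ring
  · exact (((hlog'.const_mul 2).sub (hmom'.mul_prod hgi)).sub (hgi.mul_prod hmom')).congr
      hchord.symm

end Normalization

/-- Uniqueness of the optimal function in the generalized logarithmic HLS inequality. -/
theorem log_HLS_optimizer_unique (α M : ℝ) (hα : 0 < α) (hM : 0 < M)
    (f : E2 → ℝ) (hf : Admissible f) (hmass : ∫ x, f x = M)
    (heq : (∫ x, f x * Real.log (f x / M)) + α * (∫ x, Vpot x * f x)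
        + M * (1 - α) * (1 + Real.log π)
      = (2 / M) * (α - 1) * ∫ p : E2 × E2, f p.1 * f p.2 * Real.log ‖p.1 - p.2‖) :
    f =ᵐ[volume] fun x => M * mu2 x := by
  set g : E2 → ℝ := fun x => M⁻¹ * max (f x) 0
  have hgm : Measurable g := (hf.1.max measurable_const).const_mul _
  have hg0 (x : E2) : 0 ≤ g x := mul_nonneg (inv_nonneg.mpr hM.le) (le_max_right _ _)
  have hg : g =ᵐ[volume] fun x => M⁻¹ * f x := by
    filter_upwards [hf.2.1] with x hx
    simp only [g, max_eq_left hx]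
  obtain ⟨hd, hlog, hchord⟩ := IsFiniteEnergyDensity.of_admissible hM hf hmass hgm hg0 hg
  have e1 : ∫ x, g x * log (g x) = M⁻¹ * ∫ x, f x * log (f x / M) := by
    rw [← integral_const_mul]
    refine integral_congr_ae ?_
    filter_upwards [hg] with x hx
    rw [hx, div_eq_inv_mul]
    ring
  have e2 : M⁻¹ * (∫ x, Vpot x * f x) = 2 * (∫ x, g x * log (1 + ‖x‖ ^ 2)) + log π := by
    calc M⁻¹ * (∫ x, Vpot x * f x)
        = ∫ x, (2 * (g x * log (1 + ‖x‖ ^ 2)) + g x * log π) := by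
          rw [← integral_const_mul]
          refine integral_congr_ae ?_
          filter_upwards [hg] with x hx
          rw [hx, Vpot]
          ring
      _ = _ := by
          rw [integral_add (hd.moment.const_mul 2) (hd.integrable.mul_const _),
            integral_const_mul, integral_mul_const, hd.mass, one_mul]
  have e3 : ∫ p : E2 × E2, g p.1 * g p.2 * log ‖p.1 - p.2‖
      = M⁻¹ ^ 2 * ∫ p : E2 × E2, f p.1 * f p.2 * log ‖p.1 - p.2‖ := by
    rw [← integral_const_mul]
    refine integral_congr_ae ?_
    filter_upwards [ae_prod_eq_of_ae_eq hg] with p hp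
    rw [hp.1, hp.2]
    ring
  have e4 : chordEnergy g = 2 * (∫ p : E2 × E2, g p.1 * g p.2 * log ‖p.1 - p.2‖)
      - 2 * ∫ x, g x * log (1 + ‖x‖ ^ 2) := by
    have u1 : Integrable fun p : E2 × E2 => g p.1 * log (1 + ‖p.1‖ ^ 2) * g p.2 :=
      hd.moment.mul_prod hd.integrable
    have u2 : Integrable fun p : E2 × E2 => g p.1 * (g p.2 * log (1 + ‖p.2‖ ^ 2)) :=
      hd.integrable.mul_prod hd.moment
    have u01 : Integrable fun p : E2 × E2 => 2 * (g p.1 * g p.2 * log ‖p.1 - p.2‖)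
        - g p.1 * log (1 + ‖p.1‖ ^ 2) * g p.2 := (hlog.const_mul 2).sub u1
    rw [chordEnergy, integral_congr_ae hchord, integral_sub u01 u2,
      integral_sub (hlog.const_mul 2) u1, integral_const_mul, Measure.volume_eq_prod,
      integral_prod_mul (fun x => g x * log (1 + ‖x‖ ^ 2)) g,
      integral_prod_mul g fun x => g x * log (1 + ‖x‖ ^ 2), hd.mass]
    ring
  have h0 : relEntropy g + (1 - α) * (chordEnergy g + 1) = 0 := by
    have h := congrArg (M⁻¹ * ·) heq
    simp only [mul_add] at h
    have r1 : M⁻¹ * (α * ∫ x, Vpot x * f x) = α * (M⁻¹ * ∫ x, Vpot x * f x) := by ring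
    have r2 : M⁻¹ * (2 / M * (α - 1) * ∫ p : E2 × E2, f p.1 * f p.2 * log ‖p.1 - p.2‖)
        = 2 * (α - 1) * (M⁻¹ ^ 2 * ∫ p : E2 × E2, f p.1 * f p.2 * log ‖p.1 - p.2‖) := by
      rw [div_eq_mul_inv]
      ring
    have r3 (r : ℝ) : M⁻¹ * (M * (1 - α) * r) = (1 - α) * r := by
      rw [mul_assoc, inv_mul_cancel_left₀ hM.ne']
    rw [← e1, r1, e2, r2, ← e3, r3, r3] at h
    rw [relEntropy, e4]
    linarith
  filter_upwards [hd.ae_eq_mu2_of_eq_zero hα h0, hg] with x h1 h2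
  rw [← h1, h2, mul_inv_cancel_left₀ hM.ne']
end
end

section
/- Let M > 0 and β ≥ 1 + M/(8π). Then the minimizer of the repulsive free energy F⁺_β on the set of admissible functions f on ℝ² with ∫_{ℝ²} f dx = M is unique: if f₁ and f₂ are both minimizers, then f₁ = f₂ almost everywhere. -/
open MeasureTheory Real Filter

noncomputable section

/-- The difference quotient of exponentials in Frullani's integral is integrable. -/
lemma integrableOn_inv_mul_exp_sub_exp {a : ℝ} (ha : 0 < a) :
    IntegrableOn (fun t : ℝ => t⁻¹ * (exp (-(a * t)) - exp (-t))) (Set.Ioi 0) := by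
  have hm : 0 < min a 1 := lt_min ha one_pos
  have hdom : IntegrableOn (fun t : ℝ => |1 - a| * exp (-(min a 1) * t)) (Set.Ioi 0) :=
    (exp_neg_integrableOn_Ioi 0 hm).const_mul _
  refine hdom.mono' (by fun_prop) ?_
  refine (ae_restrict_iff' measurableSet_Ioi).2 (Eventually.of_forall fun t (ht : 0 < t) => ?_)
  have key : ∀ u v : ℝ, u ≤ v → |exp (-u) - exp (-v)| ≤ (v - u) * exp (-u) := by
    intro u v huv
    have h1 : exp (-v) ≤ exp (-u) := exp_le_exp.2 (by linarith)
    rw [abs_of_nonneg (by linarith)]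
    have h2 : exp (-v) = exp (-u) * exp (u - v) := by rw [← exp_add]; ring_nf
    have h3 := add_one_le_exp (u - v)
    have h4 := exp_pos (-u)
    rw [h2]
    nlinarith
  rw [norm_eq_abs, abs_mul, abs_of_pos (inv_pos.2 ht), inv_mul_le_iff₀ ht]
  rcases le_total a 1 with h | h
  · rw [min_eq_left h, abs_of_nonneg (by linarith : 0 ≤ 1 - a)]
    refine (key (a * t) t (by nlinarith)).trans (le_of_eq ?_)
    rw [neg_mul]; ring
  · rw [min_eq_right h, abs_of_nonpos (by linarith : 1 - a ≤ 0), abs_sub_comm]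
    refine (key t (a * t) (by nlinarith)).trans (le_of_eq ?_)
    rw [neg_one_mul]; ring

lemma integral_inv_mul_exp_sub_exp {a : ℝ} (ha : 0 < a) :
    ∫ t in Set.Ioi (0 : ℝ), t⁻¹ * (exp (-(a * t)) - exp (-t)) = -log a := by
  have h := Frullani.integral_Ioi_eq (f := fun t : ℝ => exp (-t)) (a := a) (b := 1) (L := 1) (R := 0)
    ((by fun_prop : Continuous fun t : ℝ => exp (-t)).locallyIntegrable.locallyIntegrableOn _)
    ha one_pos ?_ ?_ ?_
  · simpa [smul_eq_mul, log_inv] using h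
  · have : Continuous fun t : ℝ => exp (-t) := by fun_prop
    simpa using (this.tendsto 0).mono_left nhdsWithin_le_nhds
  · exact tendsto_exp_neg_atTop_nhds_zero
  · simpa [smul_eq_mul] using integrableOn_inv_mul_exp_sub_exp ha

lemma integral_abs_inv_mul_exp_sub_exp {a : ℝ} (ha : 0 < a) :
    ∫ t in Set.Ioi (0 : ℝ), ‖t⁻¹ * (exp (-(a * t)) - exp (-t))‖ = |log a| := by
  rcases le_total a 1 with h | h
  · rw [abs_of_nonpos (log_nonpos ha.le h), ← integral_inv_mul_exp_sub_exp ha]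
    refine setIntegral_congr_fun measurableSet_Ioi fun t (ht : 0 < t) => ?_
    refine norm_of_nonneg (mul_nonneg (inv_pos.2 ht).le (sub_nonneg.2 (exp_le_exp.2 ?_)))
    nlinarith
  · rw [abs_of_nonneg (log_nonneg h), ← neg_neg (log a), ← integral_inv_mul_exp_sub_exp ha,
      ← integral_neg]
    refine setIntegral_congr_fun measurableSet_Ioi fun t (ht : 0 < t) => ?_
    refine norm_of_nonpos (mul_nonpos_of_nonneg_of_nonpos (inv_pos.2 ht).le
      (sub_nonpos.2 (exp_le_exp.2 ?_)))
    nlinarith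

lemma integrable_exp_neg_mul_sq_norm {b : ℝ} (hb : 0 < b) :
    Integrable fun z : E2 => exp (-b * ‖z‖ ^ 2) := by
  have h := (GaussianFourier.integrable_cexp_neg_mul_sq_norm_add
    (b := (b : ℂ)) (by simpa using hb) 0 (0 : E2)).re
  refine h.congr (Eventually.of_forall fun z => ?_)
  have : (-(b : ℂ) * (‖z‖ : ℂ) ^ 2 + 0 * ((inner ℝ (0 : E2) z : ℝ) : ℂ))
      = ((-b * ‖z‖ ^ 2 : ℝ) : ℂ) := by push_cast; ring
  simp only [this]
  exact Complex.exp_ofReal_re _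

/-- The product of two Gaussians as a Gaussian in the difference times a Gaussian centred at the
midpoint. -/
lemma exp_mul_exp_eq_gaussian_midpoint (t : ℝ) (x y z : E2) :
    exp (-(2 * t) * ‖x - z‖ ^ 2) * exp (-(2 * t) * ‖y - z‖ ^ 2) =
      exp (-t * ‖x - y‖ ^ 2) * exp (-(4 * t) * ‖z - (2⁻¹ : ℝ) • (x + y)‖ ^ 2) := by
  rw [← exp_add, ← exp_add]
  congr 1
  simp only [EuclideanSpace.norm_sq_eq, Fin.sum_univ_two, norm_eq_abs, sq_abs, PiLp.sub_apply,
    PiLp.smul_apply, PiLp.add_apply, smul_eq_mul]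
  ring

lemma integrable_mul_mul_gaussian {g : E2 → ℝ} (hi : Integrable g) {t : ℝ} (ht : 0 < t) :
    Integrable fun p : E2 × E2 => g p.1 * g p.2 * exp (-t * ‖p.1 - p.2‖ ^ 2) := by
  have hgg : Integrable fun p : E2 × E2 => g p.1 * g p.2 := hi.mul_prod hi
  refine hgg.mono (hgg.aestronglyMeasurable.mul (by fun_prop)) (Eventually.of_forall fun p => ?_)
  rw [norm_mul]
  refine mul_le_of_le_one_right (norm_nonneg _) ?_
  rw [norm_of_nonneg (exp_pos _).le, exp_le_one_iff]
  nlinarith [sq_nonneg ‖p.1 - p.2‖]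

/-- The Gaussian kernel is positive semidefinite on integrable functions. -/
lemma integral_mul_mul_gaussian_nonneg {g : E2 → ℝ} (hg : Measurable g) (hi : Integrable g)
    {t : ℝ} (ht : 0 < t) :
    0 ≤ ∫ p : E2 × E2, g p.1 * g p.2 * exp (-t * ‖p.1 - p.2‖ ^ 2) := by
  set C := ∫ z : E2, exp (-(4 * t) * ‖z‖ ^ 2) with hC
  have hG := integrable_exp_neg_mul_sq_norm (b := 4 * t) (by positivity)
  have hCpos : 0 < C := integral_exp_pos hG
  have hGp : ∀ m : E2, Integrable fun z : E2 => exp (-(4 * t) * ‖z - m‖ ^ 2) :=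
    fun m => hG.comp_sub_right m
  have hCm : ∀ m : E2, ∫ z : E2, exp (-(4 * t) * ‖z - m‖ ^ 2) = C :=
    fun m => integral_sub_right_eq_self (fun z : E2 => exp (-(4 * t) * ‖z‖ ^ 2)) m
  have hgg := integrable_mul_mul_gaussian hi ht
  let H : (E2 × E2) → E2 → ℝ := fun p z => (g p.1 * exp (-(2 * t) * ‖p.1 - z‖ ^ 2)) *
    (g p.2 * exp (-(2 * t) * ‖p.2 - z‖ ^ 2))
  have hH : ∀ p z, H p z = (g p.1 * g p.2 * exp (-t * ‖p.1 - p.2‖ ^ 2)) *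
      exp (-(4 * t) * ‖z - (2⁻¹ : ℝ) • (p.1 + p.2)‖ ^ 2) := by
    intro p z
    have := exp_mul_exp_eq_gaussian_midpoint t p.1 p.2 z
    simp only [H]
    linear_combination (g p.1 * g p.2) * this
  have hHint : Integrable (Function.uncurry H) := by
    refine (integrable_prod_iff ?_).2 ⟨Eventually.of_forall fun p => ?_, ?_⟩
    · simp only [H, Function.uncurry_def]; fun_prop
    · simp only [Function.uncurry_apply_pair, hH]
      exact (hGp _).const_mul _
    · simp only [Function.uncurry_apply_pair, hH, norm_mul _ (exp _),
        norm_of_nonneg (exp_pos _).le, integral_const_mul, hCm]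
      refine (hgg.norm.mul_const C).congr (Eventually.of_forall fun p => ?_)
      simp [norm_mul]
  have h1 : ∫ p, ∫ z, H p z = (∫ p : E2 × E2, g p.1 * g p.2 * exp (-t * ‖p.1 - p.2‖ ^ 2)) * C := by
    simp only [hH, integral_const_mul, hCm, integral_mul_const]
  have h2 : 0 ≤ ∫ p, ∫ z, H p z := by
    rw [integral_integral_swap hHint]
    refine integral_nonneg fun z => ?_
    simp only [H]
    change 0 ≤ ∫ p : E2 × E2, _ ∂((volume : Measure E2).prod volume)
    rw [integral_prod_mul (fun x : E2 => g x * exp (-(2 * t) * ‖x - z‖ ^ 2))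
      (fun x : E2 => g x * exp (-(2 * t) * ‖x - z‖ ^ 2))]
    exact mul_self_nonneg _
  rw [h1] at h2
  exact nonneg_of_mul_nonneg_left h2 hCpos

/-- The kernel `-log ‖x - y‖` is positive semidefinite on functions of zero mean. -/
lemma integral_mul_mul_log_nonpos {g : E2 → ℝ} (hg : Measurable g) (hi : Integrable g)
    (h0 : ∫ x, g x = 0)
    (hl : Integrable fun p : E2 × E2 => g p.1 * g p.2 * log ‖p.1 - p.2‖) :
    ∫ p : E2 × E2, g p.1 * g p.2 * log ‖p.1 - p.2‖ ≤ 0 := by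
  let H : (E2 × E2) → ℝ → ℝ := fun p t =>
    (g p.1 * g p.2) * (t⁻¹ * (exp (-(‖p.1 - p.2‖ ^ 2 * t)) - exp (-t)))
  have hpos : ∀ p : E2 × E2, p.1 ≠ p.2 → 0 < ‖p.1 - p.2‖ ^ 2 := fun p hp =>
    pow_pos (norm_pos_iff.2 (sub_ne_zero.2 hp)) 2
  have hHint : Integrable (Function.uncurry H)
      ((volume : Measure (E2 × E2)).prod (volume.restrict (Set.Ioi 0))) := by
    refine (integrable_prod_iff ?_).2 ⟨?_, ?_⟩
    · refine Measurable.aestronglyMeasurable ?_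
      simp only [H, Function.uncurry_def]; fun_prop
    · filter_upwards [ae_fst_ne_snd] with p hp
      exact (integrableOn_inv_mul_exp_sub_exp (hpos p hp)).const_mul (g p.1 * g p.2)
    · refine (hl.norm.const_mul 2).congr ?_
      filter_upwards [ae_fst_ne_snd] with p hp
      simp only [Function.uncurry_apply_pair, H, norm_mul (g p.1 * g p.2), integral_const_mul]
      rw [integral_abs_inv_mul_exp_sub_exp (hpos p hp), log_pow, abs_mul, norm_eq_abs (log _)]
      norm_num
      ring
  have h1 : ∫ p, ∫ t in Set.Ioi 0, H p t =
      -2 * ∫ p : E2 × E2, g p.1 * g p.2 * log ‖p.1 - p.2‖ := by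
    rw [← integral_const_mul]
    refine integral_congr_ae ?_
    filter_upwards [ae_fst_ne_snd] with p hp
    simp only [H, integral_const_mul]
    rw [integral_inv_mul_exp_sub_exp (hpos p hp), log_pow]
    push_cast
    ring
  have h2 : 0 ≤ ∫ p, ∫ t in Set.Ioi 0, H p t := by
    rw [integral_integral_swap hHint]
    refine setIntegral_nonneg measurableSet_Ioi fun t (ht : 0 < t) => ?_
    have hgg : Integrable fun p : E2 × E2 => g p.1 * g p.2 := hi.mul_prod hi
    have hz : ∫ p : E2 × E2, g p.1 * g p.2 = 0 := by
      change ∫ p : E2 × E2, _ ∂((volume : Measure E2).prod volume) = 0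
      rw [integral_prod_mul g g, h0, zero_mul]
    have hge := integrable_mul_mul_gaussian hi ht
    have heq : ∫ p, H p t =
        t⁻¹ * ∫ p : E2 × E2, g p.1 * g p.2 * exp (-t * ‖p.1 - p.2‖ ^ 2) := by
      have : ∀ p, H p t = t⁻¹ * (g p.1 * g p.2 * exp (-t * ‖p.1 - p.2‖ ^ 2)
          - g p.1 * g p.2 * exp (-t)) := by
        intro p
        simp only [H]
        rw [show -(‖p.1 - p.2‖ ^ 2 * t) = -t * ‖p.1 - p.2‖ ^ 2 by ring]
        ring
      simp only [this]
      rw [integral_const_mul, integral_sub hge (hgg.mul_const _), integral_mul_const, hz]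
      ring
    rw [heq]
    exact mul_nonneg (inv_pos.2 ht).le (integral_mul_mul_gaussian_nonneg hg hi ht)
  linarith

lemma Vpot_nonneg (x : E2) : 0 ≤ Vpot x := by
  have h1 : 0 ≤ log (1 + ‖x‖ ^ 2) := log_nonneg (by nlinarith [sq_nonneg ‖x‖])
  have h2 : 0 ≤ log π := log_nonneg (by linarith [pi_gt_three])
  unfold Vpot
  linarith

lemma log_norm_sub_le (x y : E2) (h : x ≠ y) : log ‖x - y‖ ≤ Vpot x + Vpot y := by
  have hx : 0 < 1 + ‖x‖ ^ 2 := by positivity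
  have hy : 0 < 1 + ‖y‖ ^ 2 := by positivity
  have hle : ‖x - y‖ ≤ (1 + ‖x‖ ^ 2) * (1 + ‖y‖ ^ 2) := by
    refine (norm_sub_le x y).trans ?_
    nlinarith [sq_nonneg (‖x‖ - 1), sq_nonneg (‖y‖ - 1), sq_nonneg (‖x‖ * ‖y‖)]
  have h1 := log_le_log (norm_pos_iff.2 (sub_ne_zero.2 h)) hle
  rw [log_mul hx.ne' hy.ne'] at h1
  have h2 : 0 ≤ log π := log_nonneg (by linarith [pi_gt_three])
  have h3 : 0 ≤ log (1 + ‖x‖ ^ 2) := log_nonneg (by nlinarith [sq_nonneg ‖x‖])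
  have h4 : 0 ≤ log (1 + ‖y‖ ^ 2) := log_nonneg (by nlinarith [sq_nonneg ‖y‖])
  unfold Vpot
  linarith

/-- The entropy form of Young's inequality. -/
lemma mul_le_mul_log_add_exp {a : ℝ} (ha : 0 ≤ a) (b : ℝ) : a * b ≤ a * log a + exp b := by
  rcases ha.eq_or_lt with rfl | ha
  · simpa using (exp_pos b).le
  · have h := add_one_le_exp (b - log a)
    rw [exp_sub, exp_log ha, le_div_iff₀ ha] at h
    nlinarith

/-- The kernel `‖z‖⁻¹` restricted to the unit disc is integrable. -/
lemma integrable_indicator_ball_inv_norm :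
    Integrable ((Metric.ball (0 : E2) 1).indicator fun z => ‖z‖⁻¹) := by
  rw [integrable_indicator_iff measurableSet_ball]
  refine (integrableOn_fun_norm_addHaar (E := E2) volume (f := fun r : ℝ => r⁻¹)).2 ?_
  have : IntegrableOn (fun _ : ℝ => (1 : ℝ)) (Set.Ioo 0 1) := by simp
  refine this.congr_fun (fun r hr => ?_) measurableSet_Ioo
  simp [hr.1.ne']

lemma Admissible.integrable_mul_log {f : E2 → ℝ} (hf : Admissible f) :
    Integrable fun x => f x * log (f x) := by
  obtain ⟨hm, h0, -, hl, -⟩ := hf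
  refine hl.mono (hm.mul (measurable_log.comp hm)).aestronglyMeasurable
    (Eventually.of_forall fun x => ?_)
  simp

/-- The mutual logarithmic interaction of two admissible functions is finite. -/
lemma Admissible.integrable_mul_mul_log {f g : E2 → ℝ} (hf : Admissible f) (hg : Admissible g) :
    Integrable fun p : E2 × E2 => f p.1 * g p.2 * log ‖p.1 - p.2‖ := by
  have hfl := hf.integrable_mul_log
  obtain ⟨hfm, hf0, hfi, -, hfV, -⟩ := hf
  obtain ⟨hgm, hg0, hgi, -, hgV, -⟩ := hg
  have i1 : Integrable fun p : E2 × E2 => (Vpot p.1 * f p.1) * g p.2 := hfV.mul_prod hgi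
  have i2 : Integrable fun p : E2 × E2 => f p.1 * (Vpot p.2 * g p.2) := hfi.mul_prod hgV
  have i3 : Integrable fun p : E2 × E2 => |f p.1 * log (f p.1)| * g p.2 := hfl.abs.mul_prod hgi
  have i4 : Integrable fun p : E2 × E2 =>
      g p.2 * (Metric.ball (0 : E2) 1).indicator (fun z => ‖z‖⁻¹) (p.1 - p.2) :=
    hgi.convolution_integrand (ContinuousLinearMap.mul ℝ ℝ) integrable_indicator_ball_inv_norm
  refine (((i1.add i2).add i3).add i4).mono'
    (Measurable.aestronglyMeasurable (by fun_prop)) ?_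
  have hf0' : ∀ᵐ p : E2 × E2, 0 ≤ f p.1 := Measure.quasiMeasurePreserving_fst.ae hf0
  have hg0' : ∀ᵐ p : E2 × E2, 0 ≤ g p.2 := Measure.quasiMeasurePreserving_snd.ae hg0
  filter_upwards [hf0', hg0', ae_fst_ne_snd] with p hfp hgp hne
  have hr : 0 < ‖p.1 - p.2‖ := norm_pos_iff.2 (sub_ne_zero.2 hne)
  have hV1 := Vpot_nonneg p.1
  have hV2 := Vpot_nonneg p.2
  simp only [Pi.add_apply]
  rw [norm_mul, norm_of_nonneg (mul_nonneg hfp hgp), norm_eq_abs]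
  have hfg := mul_nonneg hfp hgp
  have n3 : 0 ≤ |f p.1 * log (f p.1)| * g p.2 := mul_nonneg (abs_nonneg _) hgp
  rcases lt_or_ge ‖p.1 - p.2‖ 1 with h | h
  · have hmem : p.1 - p.2 ∈ Metric.ball (0 : E2) 1 := by simpa using h
    rw [Set.indicator_of_mem hmem, abs_of_nonpos (log_nonpos hr.le h.le)]
    have hy := mul_le_mul_log_add_exp hfp (-log ‖p.1 - p.2‖)
    rw [exp_neg, exp_log hr] at hy
    have hy' := mul_le_mul_of_nonneg_right
      (hy.trans (add_le_add_left (le_abs_self (f p.1 * log (f p.1))) _)) hgp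
    nlinarith [mul_nonneg hfg hV1, mul_nonneg hfg hV2]
  · have hnot : p.1 - p.2 ∉ Metric.ball (0 : E2) 1 := by simpa using h
    rw [Set.indicator_of_notMem hnot, abs_of_nonneg (log_nonneg h)]
    nlinarith [mul_le_mul_of_nonneg_left (log_norm_sub_le p.1 p.2 hne) hfg]

lemma midpoint_mul_log_le {a b : ℝ} (ha : 0 ≤ a) (hb : 0 ≤ b) :
    (a + b) / 2 * log ((a + b) / 2) ≤ (a * log a + b * log b) / 2 := by
  have h := convexOn_mul_log.2 (Set.mem_Ici.2 ha) (Set.mem_Ici.2 hb)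
    (by norm_num : (0 : ℝ) ≤ 1 / 2) (by norm_num : (0 : ℝ) ≤ 1 / 2) (by norm_num)
  simp only [smul_eq_mul] at h
  rw [show 1 / 2 * a + 1 / 2 * b = (a + b) / 2 by ring] at h
  linarith

lemma midpoint_mul_log_lt {a b : ℝ} (ha : 0 ≤ a) (hb : 0 ≤ b) (hab : a ≠ b) :
    (a + b) / 2 * log ((a + b) / 2) < (a * log a + b * log b) / 2 := by
  have h := strictConvexOn_mul_log.2 (Set.mem_Ici.2 ha) (Set.mem_Ici.2 hb) hab
    (by norm_num : (0 : ℝ) < 1 / 2) (by norm_num : (0 : ℝ) < 1 / 2) (by norm_num)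
  simp only [smul_eq_mul] at h
  rw [show 1 / 2 * a + 1 / 2 * b = (a + b) / 2 by ring] at h
  linarith

lemma le_midpoint_mul_log {a b : ℝ} (ha : 0 ≤ a) (hb : 0 ≤ b) :
    (a * log a + b * log b) / 2 - log 2 / 2 * (a + b) ≤ (a + b) / 2 * log ((a + b) / 2) := by
  have key : ∀ u v : ℝ, 0 ≤ u → 0 ≤ v → u * (log u - log 2) ≤ u * log ((u + v) / 2) := by
    intro u v hu hv
    rcases hu.eq_or_lt with rfl | hu
    · simp
    · rw [← log_div hu.ne' two_ne_zero]
      exact mul_le_mul_of_nonneg_left (log_le_log (by positivity) (by linarith)) hu.le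
  have h1 := key a b ha hb
  have h2 := key b a hb ha
  rw [add_comm b a] at h2
  linarith

lemma Admissible.midpoint {f g : E2 → ℝ} (hf : Admissible f) (hg : Admissible g) :
    Admissible fun x => (f x + g x) / 2 := by
  have hfl := hf.integrable_mul_log
  have hgl := hg.integrable_mul_log
  have hff := hf.integrable_mul_mul_log hf
  have hfg := hf.integrable_mul_mul_log hg
  have hgf := hg.integrable_mul_mul_log hf
  have hgg := hg.integrable_mul_mul_log hg
  obtain ⟨hfm, hf0, hfi, -, hfV, -⟩ := hf
  obtain ⟨hgm, hg0, hgi, -, hgV, -⟩ := hg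
  have hm : Measurable fun x => (f x + g x) / 2 := (hfm.add hgm).div_const 2
  have h0 : ∀ᵐ x : E2, 0 ≤ (f x + g x) / 2 := by
    filter_upwards [hf0, hg0] with x hx hy
    positivity
  refine ⟨hm, h0, (hfi.add hgi).div_const 2, ?_, ?_, ?_⟩
  · refine (((hfl.abs.add hgl.abs).div_const 2).add ((hfi.add hgi).const_mul (log 2 / 2))).mono'
      (hm.mul (measurable_log.comp hm).abs).aestronglyMeasurable ?_
    filter_upwards [hf0, hg0] with x hx hy
    have h1 := midpoint_mul_log_le hx hy
    have h2 := le_midpoint_mul_log hx hy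
    have h3 : 0 ≤ log 2 / 2 * (f x + g x) :=
      mul_nonneg (div_nonneg (log_nonneg one_le_two) zero_le_two) (add_nonneg hx hy)
    have h4 := neg_abs_le (f x * log (f x))
    have h5 := neg_abs_le (g x * log (g x))
    have h6 := le_abs_self (f x * log (f x))
    have h7 := le_abs_self (g x * log (g x))
    simp only [Pi.add_apply]
    rw [norm_mul, norm_eq_abs, norm_eq_abs, abs_abs, ← abs_mul, abs_le]
    constructor <;> linarith
  · refine ((hfV.add hgV).div_const 2).congr (Eventually.of_forall fun x => ?_)
    simp only [Pi.add_apply]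
    ring
  · have h := (((hff.add hfg).add hgf).add hgg).div_const 4
    have hnonneg : ∀ᵐ p : E2 × E2, 0 ≤ (f p.1 + g p.1) / 2 ∧ 0 ≤ (f p.2 + g p.2) / 2 :=
      (Measure.quasiMeasurePreserving_fst.ae h0).and (Measure.quasiMeasurePreserving_snd.ae h0)
    refine h.norm.congr ?_
    filter_upwards [hnonneg] with p hp
    simp only [Pi.add_apply]
    rw [← abs_of_nonneg (mul_nonneg hp.1 hp.2), ← abs_mul, norm_eq_abs]
    congr 1
    ring

/-- Parallelogram inequality for the logarithmic interaction of functions of equal mass. -/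
lemma Admissible.interaction_midpoint_ge {f g : E2 → ℝ} (hf : Admissible f) (hg : Admissible g)
    (hfg : ∫ x, f x = ∫ x, g x) :
    ((∫ p : E2 × E2, f p.1 * f p.2 * log ‖p.1 - p.2‖) +
        ∫ p : E2 × E2, g p.1 * g p.2 * log ‖p.1 - p.2‖) / 2 ≤
      ∫ p : E2 × E2, (f p.1 + g p.1) / 2 * ((f p.2 + g p.2) / 2) * log ‖p.1 - p.2‖ := by
  have i1 := hf.integrable_mul_mul_log hf
  have i2 := hf.integrable_mul_mul_log hg
  have i3 := hg.integrable_mul_mul_log hf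
  have i4 := hg.integrable_mul_mul_log hg
  have hdiff : Integrable fun p : E2 × E2 =>
      (f p.1 - g p.1) * (f p.2 - g p.2) * log ‖p.1 - p.2‖ :=
    (((i1.sub i2).sub i3).add i4).congr (Eventually.of_forall fun p => by
      simp only [Pi.add_apply, Pi.sub_apply]; ring)
  have hneg := integral_mul_mul_log_nonpos (g := fun x => f x - g x) (hf.1.sub hg.1)
    (hf.2.2.1.sub hg.2.2.1) (by rw [integral_sub hf.2.2.1 hg.2.2.1, hfg, sub_self]) hdiff
  have heq : ∫ p : E2 × E2, (f p.1 + g p.1) / 2 * ((f p.2 + g p.2) / 2) * log ‖p.1 - p.2‖ =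
      ((∫ p : E2 × E2, f p.1 * f p.2 * log ‖p.1 - p.2‖) +
        ∫ p : E2 × E2, g p.1 * g p.2 * log ‖p.1 - p.2‖) / 2 -
      (∫ p : E2 × E2, (f p.1 - g p.1) * (f p.2 - g p.2) * log ‖p.1 - p.2‖) / 4 := by
    rw [← integral_add i1 i4, ← integral_div, ← integral_div,
      ← integral_sub ((i1.fun_add i4).div_const 2) (hdiff.div_const 4)]
    refine integral_congr_ae (Eventually.of_forall fun p => ?_)
    ring
  rw [heq]
  linarith

/-- Uniqueness of the minimizer of the repulsive free energy F⁺_β when β ≥ 1 + M/(8π). -/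
theorem Fplus_minimizer_unique (M β : ℝ) (hM : 0 < M) (hβ : β ≥ 1 + M / (8 * π))
    (f₁ f₂ : E2 → ℝ)
    (h₁ : Admissible f₁ ∧ (∫ x, f₁ x) = M ∧
      ∀ f : E2 → ℝ, Admissible f → (∫ x, f x) = M → Fplus β f₁ ≤ Fplus β f)
    (h₂ : Admissible f₂ ∧ (∫ x, f₂ x) = M ∧
      ∀ f : E2 → ℝ, Admissible f → (∫ x, f x) = M → Fplus β f₂ ≤ Fplus β f) :
    f₁ =ᵐ[volume] f₂ := by
  obtain ⟨ha₁, hm₁, hmin₁⟩ := h₁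
  obtain ⟨ha₂, hm₂, hmin₂⟩ := h₂
  have ha := ha₁.midpoint ha₂
  have hm : ∫ x, (f₁ x + f₂ x) / 2 = M := by
    rw [integral_div, integral_add ha₁.2.2.1 ha₂.2.2.1, hm₁, hm₂]
    ring
  have hF₁ := hmin₁ _ ha hm
  have hF₂ := hmin₂ _ ha hm
  have hI := ha₁.interaction_midpoint_ge ha₂ (hm₁.trans hm₂.symm)
  have hV : ∫ x, Vpot x * ((f₁ x + f₂ x) / 2) =
      ((∫ x, Vpot x * f₁ x) + ∫ x, Vpot x * f₂ x) / 2 := by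
    rw [← integral_add ha₁.2.2.2.2.1 ha₂.2.2.2.2.1, ← integral_div]
    refine integral_congr_ae (Eventually.of_forall fun x => ?_)
    ring
  have i₁ := ha₁.integrable_mul_log
  have i₂ := ha₂.integrable_mul_log
  have i := ha.integrable_mul_log
  have hS : ((∫ x, f₁ x * log (f₁ x)) + ∫ x, f₂ x * log (f₂ x)) / 2 ≤
      ∫ x, (f₁ x + f₂ x) / 2 * log ((f₁ x + f₂ x) / 2) := by
    have hI' := mul_le_mul_of_nonneg_left hI (by positivity : 0 ≤ 1 / (4 * π))
    simp only [Fplus, hV] at hF₁ hF₂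
    linarith
  have hD : Integrable fun x => (f₁ x * log (f₁ x) + f₂ x * log (f₂ x)) / 2 -
      (f₁ x + f₂ x) / 2 * log ((f₁ x + f₂ x) / 2) := ((i₁.add i₂).div_const 2).sub i
  have hD0 : 0 ≤ᵐ[volume] fun x => (f₁ x * log (f₁ x) + f₂ x * log (f₂ x)) / 2 -
      (f₁ x + f₂ x) / 2 * log ((f₁ x + f₂ x) / 2) := by
    filter_upwards [ha₁.2.1, ha₂.2.1] with x hx hy
    exact sub_nonneg.2 (midpoint_mul_log_le hx hy)
  have hDi : ∫ x, ((f₁ x * log (f₁ x) + f₂ x * log (f₂ x)) / 2 -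
      (f₁ x + f₂ x) / 2 * log ((f₁ x + f₂ x) / 2)) = 0 := by
    refine le_antisymm ?_ (integral_nonneg_of_ae hD0)
    rw [integral_sub ((i₁.fun_add i₂).div_const 2) i, integral_div, integral_add i₁ i₂]
    linarith
  filter_upwards [(integral_eq_zero_iff_of_nonneg_ae hD0 hD).1 hDi, ha₁.2.1, ha₂.2.1]
    with x hx hx₁ hx₂
  by_contra hne
  have hlt := midpoint_mul_log_lt hx₁ hx₂ hne
  simp only [Pi.zero_apply] at hx
  linarith
end
end
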